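/- arXiv:1712.04016 — 3 statements merged into one kernel-verified Lean document; each statement's English description precedes it below -/
import Mathlib

section
/- Let Q be a commutative ring, let P₁, …, P_s be prime ideals of Q, let J be an ideal of Q and x an element of Q such that the ideal J + (x) is not contained in the union P₁ ∪ P₂ ∪ … ∪ P_s. Then there exists an element v ∈ J such that v + x ∉ P₁ ∪ P₂ ∪ … ∪ P_s. -/
theorem aux_avoid {Q : Type*} [CommRing Q] (J : Ideal Q) (x : Q) (n : ℕ) :
    ∀ T : Finset (Ideal Q), T.card = n → (∀ p ∈ T, p.IsPrime) →
      (∀ p ∈ T, J ≤ p → x ∉ p) → ∃ v ∈ J, ∀ p ∈ T, v + x ∉ p := by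
  classical
  induction n with
  | zero =>
    intro T hT _ _
    rw [Finset.card_eq_zero] at hT
    subst hT
    exact ⟨0, J.zero_mem, by simp⟩
  | succ n ih =>
    intro T hT hp hx
    have hne : T.Nonempty := by
      rw [← Finset.card_pos]; omega
    obtain ⟨p0, hp0⟩ := T.exists_minimal hne
    have hm : p0 ∈ T := hp0.prop
    obtain ⟨v, hv, hvT⟩ := ih (T.erase p0) (by rw [Finset.card_erase_of_mem hm]; omega)
      (fun p h => hp p (Finset.mem_of_mem_erase h))
      (fun p h => hx p (Finset.mem_of_mem_erase h))
    by_cases hv0 : v + x ∈ p0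
    · have hpr := hp p0 hm
      have hJ : ¬ J ≤ p0 := fun hJ => hx p0 hm hJ ((p0.add_mem_iff_right (hJ hv)).1 hv0)
      have hprod : ¬ (J * ∏ p ∈ T.erase p0, p) ≤ p0 := by
        rw [hpr.mul_le, hpr.prod_le]
        rintro (h | ⟨p, h, hle⟩)
        · exact hJ h
        · exact (Finset.ne_of_mem_erase h)
            (le_antisymm hle (hp0.le_of_le (Finset.mem_of_mem_erase h) hle))
      obtain ⟨w, hw, hw0⟩ := SetLike.not_le_iff_exists.1 hprod
      have hK : ∀ K : Ideal Q, w ∈ J * K → w ∈ J ∧ w ∈ K := fun K h =>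
        Ideal.mem_inf.1 ((Ideal.mul_le_inf : J * K ≤ J ⊓ K) h)
      obtain ⟨hwJ, hwK⟩ := hK _ hw
      refine ⟨v + w, J.add_mem hv hwJ, fun p h hmem => ?_⟩
      rw [add_right_comm] at hmem
      by_cases hpe : p = p0
      · subst hpe
        exact hw0 ((p.add_mem_iff_right hv0).1 hmem)
      · have he := Finset.mem_erase.2 ⟨hpe, h⟩
        have hwp : w ∈ p := by
          exact (Ideal.prod_le_inf.trans (Finset.inf_le (f := fun p => p) he)) hwK
        exact hvT p he ((p.add_mem_iff_left hwp).1 hmem)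
    · refine ⟨v, hv, fun p h => ?_⟩
      by_cases hpe : p = p0
      · rwa [hpe]
      · exact hvT p (Finset.mem_erase.2 ⟨hpe, h⟩)


/-- **Lemma 1.1.** Let `Q` be a commutative ring, `P₁, …, P_s` prime ideals of `Q`,
`J` an ideal of `Q`, and `x ∈ Q` such that the ideal `J + (x)` is not contained in the
union `P₁ ∪ … ∪ P_s`.  Then there exists `v ∈ J` with `v + x ∉ P₁ ∪ … ∪ P_s`. -/
theorem stmt_0 (Q : Type*) [CommRing Q] (s : ℕ) (hs : 1 ≤ s)
    (P : Fin s → Ideal Q) (hP : ∀ i, (P i).IsPrime)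
    (J : Ideal Q) (x : Q)
    (h : ¬ (↑(J + Ideal.span {x}) : Set Q) ⊆ ⋃ i, (P i : Set Q)) :
    ∃ v ∈ J, v + x ∉ ⋃ i, (P i : Set Q) := by
  classical
  obtain ⟨y, hy, hyP⟩ := Set.not_subset.1 h
  obtain ⟨v, hv, hvT⟩ := aux_avoid J x _ (Finset.univ.image P) rfl
    (by simpa using hP) (by
      intro p hp hJ hx
      obtain ⟨i, -, rfl⟩ := Finset.mem_image.1 hp
      apply hyP
      refine Set.mem_iUnion.2 ⟨i, ?_⟩
      have hle : J + Ideal.span {x} ≤ P i :=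
        sup_le hJ ((Ideal.span_singleton_le_iff_mem _).2 hx)
      exact hle hy)
  refine ⟨v, hv, fun hmem => ?_⟩
  obtain ⟨i, hi⟩ := Set.mem_iUnion.1 hmem
  exact hvT (P i) (Finset.mem_image_of_mem _ (Finset.mem_univ i)) hi
end

section
/- Let (Q, 𝔫, k) be a commutative Noetherian local ring and I ⊆ Q a grade 3 perfect ideal of resolution format (1, m, m+n−1, n). If m ≥ 4, then there exists a grade 3 perfect ideal J of resolution format (1, n+3, m+n, m−2) that is directly linked to I. -/
/-- An ideal `I` in a commutative Noetherian local ring `Q` has **resolution format**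
`(1, m, m+n-1, n)` if the minimal free resolution of `Q/I` over `Q` is
`0 → Q^n → Q^{m+n-1} → Q^m → Q`, i.e. there is an exact complex of free modules of the
indicated ranks augmented by `Q → Q/I → 0`, which is minimal in the sense that each
differential maps into `𝔫` times the target (`𝔫` the maximal ideal).  Equivalently, the
`i`-th entry of the format is the Betti number `dim_k Tor_i^Q(Q/I, k)`. -/
def HasResolutionFormat {Q : Type*} [CommRing Q] [IsLocalRing Q]
    (I : Ideal Q) (m n : ℕ) : Prop :=
  ∃ (d1 : (Fin m → Q) →ₗ[Q] Q)
    (d2 : (Fin (m + n - 1) → Q) →ₗ[Q] (Fin m → Q))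
    (d3 : (Fin n → Q) →ₗ[Q] (Fin (m + n - 1) → Q)),
    LinearMap.range d1 = I ∧
    LinearMap.range d2 = LinearMap.ker d1 ∧
    LinearMap.range d3 = LinearMap.ker d2 ∧
    LinearMap.ker d3 = ⊥ ∧
    I ≤ IsLocalRing.maximalIdeal Q ∧
    LinearMap.range d2 ≤ (IsLocalRing.maximalIdeal Q) • (⊤ : Submodule Q (Fin m → Q)) ∧
    LinearMap.range d3 ≤ (IsLocalRing.maximalIdeal Q) • (⊤ : Submodule Q (Fin (m + n - 1) → Q))

/-- `I` is a grade `3` perfect ideal of resolution format `(1, m, m+n-1, n)`: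
`I` contains a `Q`-regular sequence of length `3`, one has `m ≥ 3` and `n ≥ 1`, and the
minimal free resolution of `Q/I` has the format `(1, m, m+n-1, n)` (in particular `Q/I`
has projective dimension `3` as a `Q`-module, since `n ≥ 1`). -/
def IsGrade3PerfectOfFormat {Q : Type*} [CommRing Q] [IsLocalRing Q]
    (I : Ideal Q) (m n : ℕ) : Prop :=
  (∃ x y z : Q, x ∈ I ∧ y ∈ I ∧ z ∈ I ∧ RingTheory.Sequence.IsRegular Q [x, y, z]) ∧
  3 ≤ m ∧ 1 ≤ n ∧ HasResolutionFormat I m n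

/-- `J` is **directly linked** to `I` if there is a `Q`-regular sequence `x₁, x₂, x₃` of
elements of `I` with `J = (x₁, x₂, x₃) : I`. -/
def DirectlyLinked {Q : Type*} [CommRing Q] (I J : Ideal Q) : Prop :=
  ∃ x y z : Q, x ∈ I ∧ y ∈ I ∧ z ∈ I ∧ RingTheory.Sequence.IsRegular Q [x, y, z] ∧
    J = Submodule.colon (Ideal.span {x, y, z}) I

/-- `J` is **linked** to `I` if there is a finite chain of ideals
`I = J₀, J₁, …, J_r = J` in which `J_{i+1}` is directly linked to `J_i` for every `i`. -/
def Linked {Q : Type*} [CommRing Q] (I J : Ideal Q) : Prop :=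
  Relation.ReflTransGen (fun A B => DirectlyLinked A B) I J

/-- `I` is **licci** if it is linked to an ideal generated by a `Q`-regular sequence of
length `3`, i.e. `I` is in the linkage class of a complete intersection ideal. -/
def Licci {Q : Type*} [CommRing Q] (I : Ideal Q) : Prop :=
  ∃ C : Ideal Q, Linked I C ∧
    ∃ x y z : Q, RingTheory.Sequence.IsRegular Q [x, y, z] ∧ C = Ideal.span {x, y, z}

section Part1

/-- elementary form of a weakly regular sequence of length 3 -/
structure Reg3 {Q : Type*} [CommRing Q] (x y z : Q) : Prop where
  h1 : ∀ a, x * a = 0 → a = 0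
  h2 : ∀ a b, y * a = x * b → ∃ c, a = x * c
  h3 : ∀ a b c, z * a = x * b + y * c → ∃ d e, a = x * d + y * e

theorem smulReg_quot_iff {Q : Type*} [CommRing Q] (K : Ideal Q) (r : Q) :
    IsSMulRegular (Q ⧸ K) r ↔ ∀ a, r * a ∈ K → a ∈ K := by
  rw [isSMulRegular_iff_right_eq_zero_of_smul]
  constructor
  · intro h a ha
    have := h (Ideal.Quotient.mk K a) (by
      rw [← Ideal.Quotient.mk_eq_mk, ← Submodule.Quotient.mk_smul]
      exact (Submodule.Quotient.mk_eq_zero _).2 ha)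
    exact Ideal.Quotient.eq_zero_iff_mem.1 this
  · intro h a
    obtain ⟨a, rfl⟩ := Ideal.Quotient.mk_surjective a
    intro ha
    rw [← Ideal.Quotient.mk_eq_mk, ← Submodule.Quotient.mk_smul] at ha
    exact Ideal.Quotient.eq_zero_iff_mem.2 (h a ((Submodule.Quotient.mk_eq_zero _).1 ha))

theorem weaklyRegular_iff_reg3 {Q : Type*} [CommRing Q] (x y z : Q) :
    RingTheory.Sequence.IsWeaklyRegular Q [x, y, z] ↔ Reg3 x y z := by
  rw [RingTheory.Sequence.isWeaklyRegular_iff_Fin]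
  have e0 : (Ideal.ofList ([] : List Q) • ⊤ : Ideal Q) = ⊥ := by simp
  have e1 : (Ideal.ofList ([x] : List Q) • ⊤ : Ideal Q) = Ideal.span {x} := by simp
  have e2 : (Ideal.ofList ([x, y] : List Q) • ⊤ : Ideal Q) = Ideal.span {x, y} := by
    simp [Ideal.span_insert]
  have key : (∀ i : Fin [x, y, z].length, IsSMulRegular
      (Q ⧸ (Ideal.ofList ([x, y, z].take i) • ⊤ : Submodule Q Q)) [x, y, z][i]) ↔
      (∀ a, x * a ∈ (Ideal.ofList ([] : List Q) • ⊤ : Ideal Q) →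
        a ∈ (Ideal.ofList ([] : List Q) • ⊤ : Ideal Q)) ∧
      (∀ a, y * a ∈ (Ideal.ofList ([x] : List Q) • ⊤ : Ideal Q) →
        a ∈ (Ideal.ofList ([x] : List Q) • ⊤ : Ideal Q)) ∧
      (∀ a, z * a ∈ (Ideal.ofList ([x, y] : List Q) • ⊤ : Ideal Q) →
        a ∈ (Ideal.ofList ([x, y] : List Q) • ⊤ : Ideal Q)) := by
    rw [← smulReg_quot_iff, ← smulReg_quot_iff, ← smulReg_quot_iff]
    constructor
    · intro h
      exact ⟨h ⟨0, by simp⟩, h ⟨1, by simp⟩, h ⟨2, by simp⟩⟩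
    · rintro ⟨h0, h1, h2⟩ ⟨i, hi⟩
      match i, hi with
      | 0, _ => exact h0
      | 1, _ => exact h1
      | 2, _ => exact h2
  rw [key, e0, e1, e2]
  simp only [Ideal.mem_bot, Ideal.mem_span_singleton, Ideal.mem_span_pair]
  constructor
  · rintro ⟨h0, h1, h2⟩
    refine ⟨h0, fun a b hab => h1 a ⟨b, hab⟩, fun a b c h => ?_⟩
    obtain ⟨d, e, h⟩ := h2 a ⟨b, c, by rw [h]; ring⟩
    exact ⟨d, e, by rw [← h]; ring⟩
  · rintro ⟨h0, h1, h2⟩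
    refine ⟨h0, fun a ⟨b, hab⟩ => h1 a b hab, fun a ⟨b, c, h⟩ => ?_⟩
    obtain ⟨d, e, h⟩ := h2 a b c (by rw [← h]; ring)
    exact ⟨d, e, by rw [h]; ring⟩

theorem coset_avoid {Q : Type*} [CommRing Q] (L : Ideal Q) (a : Q) (S : Finset (Ideal Q)) :
    (∀ P ∈ S, P.IsPrime) → (∀ P ∈ S, ¬ L ≤ P) → ∃ w ∈ L, ∀ P ∈ S, a + w ∉ P := by
  classical
  induction S using Finset.strongInduction with
  | H S ih =>
    intro hp hL
    rcases S.eq_empty_or_nonempty with rfl | hne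
    · exact ⟨0, L.zero_mem, by simp⟩
    obtain ⟨P, hP⟩ := S.exists_minimal hne
    have hPS : P ∈ S := hP.1
    obtain ⟨w, hw, hwS⟩ := ih (S.erase P) (Finset.erase_ssubset hPS)
      (fun R hR => hp R (Finset.mem_of_mem_erase hR))
      (fun R hR => hL R (Finset.mem_of_mem_erase hR))
    by_cases haw : a + w ∈ P
    · have hnot : ¬ L ⊓ (S.erase P).inf id ≤ P := by
        intro hle
        rcases (hp P hPS).inf_le.1 hle with h | h
        · exact hL P hPS h
        · obtain ⟨R, hR, hRP⟩ := ((hp P hPS).inf_le').1 h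
          have := hP.2 (Finset.mem_of_mem_erase hR) hRP
          exact (Finset.ne_of_mem_erase hR) (le_antisymm hRP this)
      obtain ⟨w', hw', hw'P⟩ := Set.not_subset.1 hnot
      have hw'' : w' ∈ L ∧ w' ∈ (S.erase P).inf id := Submodule.mem_inf.1 hw'
      refine ⟨w + w', L.add_mem hw hw''.1, fun R hR h => ?_⟩
      by_cases hRP : R = P
      · subst hRP
        apply hw'P
        have := R.sub_mem h haw
        simpa [← add_assoc] using this
      · have hR' : R ∈ S.erase P := Finset.mem_erase.2 ⟨hRP, hR⟩
        apply hwS R hR'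
        have h1 : w' ∈ R := (Finset.inf_le (f := id) hR') hw''.2
        have := R.sub_mem h h1
        simpa [← add_assoc] using this
    · refine ⟨w, hw, fun R hR => ?_⟩
      by_cases hRP : R = P
      · subst hRP; exact haw
      · exact hwS R (Finset.mem_erase.2 ⟨hRP, hR⟩)

theorem avoid {Q : Type*} [CommRing Q] [IsNoetherianRing Q] [IsLocalRing Q]
    (I K : Ideal Q) (hI : I ≤ IsLocalRing.maximalIdeal Q)
    (hK : ∀ b, (∀ a ∈ I, a * b ∈ K) → b ∈ K) (a : Q) :
    ∃ w ∈ IsLocalRing.maximalIdeal Q * I, ∀ b, (a + w) * b ∈ K → b ∈ K := by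
  have hfin := associatedPrimes.finite Q (Q ⧸ K)
  obtain ⟨w, hw, hav⟩ := coset_avoid (IsLocalRing.maximalIdeal Q * I) a hfin.toFinset
    (fun P hP => ((hfin.mem_toFinset).1 hP).isPrime)
    (fun P hP hle => by
      have hP' := (hfin.mem_toFinset).1 hP
      have hpr := hP'.isPrime
      have hIP : I ≤ P := by
        rcases hpr.mul_le.1 hle with h | h
        · exact hI.trans h
        · exact h
      rw [AssociatedPrimes.mem_iff, isAssociatedPrime_iff] at hP'
      obtain ⟨_, x, hx⟩ := hP'
      obtain ⟨b, rfl⟩ := Ideal.Quotient.mk_surjective x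
      have hb : b ∈ K := hK b (fun c hc => by
        have : c ∈ P := hIP hc
        rw [hx, Submodule.mem_colon_singleton, Submodule.mem_bot,
          ← Ideal.Quotient.mk_eq_mk, ← Submodule.Quotient.mk_smul] at this
        exact (Submodule.Quotient.mk_eq_zero _).1 this)
      apply hpr.ne_top
      rw [hx, Ideal.Quotient.eq_zero_iff_mem.2 hb]
      simp)
  refine ⟨w, hw, (smulReg_quot_iff K (a + w)).1 ?_⟩
  have h := biUnion_associatedPrimes_eq_compl_regular Q (Q ⧸ K)
  by_contra hcon
  have : (a + w) ∈ ⋃ p ∈ associatedPrimes Q (Q ⧸ K), (p : Set Q) := by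
    rw [h]; exact hcon
  simp only [Set.mem_iUnion] at this
  obtain ⟨P, hP, hmem⟩ := this
  exact hav P (hfin.mem_toFinset.2 hP) hmem

theorem exists_reg3 {Q : Type*} [CommRing Q] [IsNoetherianRing Q] [IsLocalRing Q]
    (I : Ideal Q) (hI : I ≤ IsLocalRing.maximalIdeal Q)
    {x y z : Q} (hx : x ∈ I) (hy : y ∈ I) (hz : z ∈ I) (hr : Reg3 x y z)
    (a₁ a₂ a₃ : Q) :
    ∃ w₁ ∈ IsLocalRing.maximalIdeal Q * I, ∃ w₂ ∈ IsLocalRing.maximalIdeal Q * I,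
    ∃ w₃ ∈ IsLocalRing.maximalIdeal Q * I, Reg3 (a₁ + w₁) (a₂ + w₂) (a₃ + w₃) := by
  obtain ⟨w₁, hw₁, k₁⟩ := avoid I ⊥ hI (fun b hb => hr.h1 b (by simpa using hb x hx)) a₁
  obtain ⟨x₁, hx₁⟩ : ∃ t, t = a₁ + w₁ := ⟨_, rfl⟩
  rw [← hx₁] at k₁
  have k₁' : ∀ b, x₁ * b = 0 → b = 0 := fun b hb => by simpa using k₁ b (by simpa using hb)
  obtain ⟨w₂, hw₂, k₂⟩ := avoid I (Ideal.span {x₁}) hI (fun b hb => by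
    obtain ⟨c, hc⟩ := Ideal.mem_span_singleton.1 (hb x hx)
    obtain ⟨d, hd⟩ := Ideal.mem_span_singleton.1 (hb y hy)
    have h1 : c * y - d * x = 0 := k₁' _ (by linear_combination (-y) * hc + x * hd)
    obtain ⟨t, ht⟩ := hr.h2 c d (by linear_combination h1)
    have := hr.h1 (b - x₁ * t) (by linear_combination hc + x₁ * ht)
    exact Ideal.mem_span_singleton.2 ⟨t, by linear_combination this⟩) a₂
  obtain ⟨x₂, hx₂⟩ : ∃ t, t = a₂ + w₂ := ⟨_, rfl⟩
  rw [← hx₂] at k₂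
  have k₂' : ∀ a b, x₂ * a = x₁ * b → ∃ c, a = x₁ * c := fun a b hb =>
    Ideal.mem_span_singleton.1 (k₂ a (Ideal.mem_span_singleton.2 ⟨b, hb⟩))
  obtain ⟨w₃, hw₃, k₃⟩ := avoid I (Ideal.span {x₁, x₂}) hI (fun b hb => by
    obtain ⟨c1, c2, hc⟩ := Ideal.mem_span_pair.1 (hb x hx)
    obtain ⟨d1, d2, hd⟩ := Ideal.mem_span_pair.1 (hb y hy)
    obtain ⟨g1, g2, hg⟩ := Ideal.mem_span_pair.1 (hb z hz)
    have ex : ∀ s t : Q, x₁ * s + x₂ * t = 0 → ∃ p, s = x₂ * p ∧ t = - (x₁ * p) := by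
      intro s t h
      obtain ⟨p, hp⟩ := k₂' t (-s) (by linear_combination h)
      refine ⟨-p, ?_, by linear_combination hp⟩
      have := k₁' (s + x₂ * p) (by linear_combination h - x₂ * hp)
      linear_combination this
    obtain ⟨p, hp1, hp2⟩ := ex (c1 * y - d1 * x) (c2 * y - d2 * x)
      (by linear_combination y * hc - x * hd)
    obtain ⟨q, hq1, hq2⟩ := ex (c1 * z - g1 * x) (c2 * z - g2 * x)
      (by linear_combination z * hc - x * hg)
    obtain ⟨r, hr1, hr2⟩ := ex (d1 * z - g1 * y) (d2 * z - g2 * y)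
      (by linear_combination z * hd - y * hg)
    have h0 : z * p - y * q + x * r = 0 :=
      k₁' _ (by linear_combination z * hp2 - y * hq2 + x * hr2)
    obtain ⟨p1, p2, hpp⟩ := hr.h3 p (-r) q (by linear_combination h0)
    obtain ⟨c1', hc1⟩ := hr.h2 (c1 - x₂ * p2) (d1 + x₂ * p1)
      (by linear_combination hp1 + x₂ * hpp)
    obtain ⟨c2', hc2⟩ := hr.h2 (c2 + x₁ * p2) (d2 - x₁ * p1)
      (by linear_combination hp2 - x₁ * hpp)
    have := hr.h1 (b - (c1' * x₁ + c2' * x₂))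
      (by linear_combination (-1) * hc + x₁ * hc1 + x₂ * hc2)
    exact Ideal.mem_span_pair.2 ⟨c1', c2', by linear_combination -this⟩) a₃
  refine ⟨w₁, hw₁, w₂, hw₂, w₃, hw₃, ?_⟩
  rw [← hx₁, ← hx₂]
  refine ⟨k₁', k₂', fun a b c h => ?_⟩
  obtain ⟨d, e, h⟩ := Ideal.mem_span_pair.1 (k₃ a (Ideal.mem_span_pair.2
    ⟨b, c, by rw [h]; ring⟩))
  exact ⟨d, e, by rw [← h]; ring⟩

theorem Reg3.koszul {Q : Type*} [CommRing Q] {x y z : Q} (hr : Reg3 x y z) {a b c : Q}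
    (h : x * a + y * b + z * c = 0) :
    ∃ p q r, a = - (y * p) - z * q ∧ b = x * p - z * r ∧ c = x * q + y * r := by
  obtain ⟨q, r, hc⟩ := hr.h3 c (-a) (-b) (by linear_combination h)
  obtain ⟨p, hp⟩ := hr.h2 (b + z * r) (-(a + z * q)) (by linear_combination h - z * hc)
  have := hr.h1 (a + y * p + z * q) (by linear_combination h - z * hc - y * hp)
  exact ⟨p, q, r, by linear_combination this, by linear_combination hp, hc⟩

end Part1
section Part2

open IsLocalRing

structure Res {Q F1 F2 F3 : Type*} [CommRing Q] [AddCommGroup F1] [AddCommGroup F2]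
    [AddCommGroup F3] [Module Q F1] [Module Q F2] [Module Q F3]
    (d1 : F1 →ₗ[Q] Q) (d2 : F2 →ₗ[Q] F1) (d3 : F3 →ₗ[Q] F2) : Prop where
  c1 : ∀ w, d1 (d2 w) = 0
  x1 : ∀ z, d1 z = 0 → ∃ w, d2 w = z
  c2 : ∀ w, d2 (d3 w) = 0
  x2 : ∀ z, d2 z = 0 → ∃ w, d3 w = z
  inj : ∀ w, d3 w = 0 → w = 0

def beta {Q F1 : Type*} [CommRing Q] [AddCommGroup F1] [Module Q F1]
    (d1 : F1 →ₗ[Q] Q) (u v : F1) : F1 := d1 u • v - d1 v • u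

theorem d1_beta {Q F1 : Type*} [CommRing Q] [AddCommGroup F1] [Module Q F1]
    (d1 : F1 →ₗ[Q] Q) (u v : F1) : d1 (beta d1 u v) = 0 := by
  simp [beta]; ring

theorem antisymm_sum {Q : Type*} [CommRing Q] {r : ℕ} (f : Fin r → Fin r → Q)
    (h0 : ∀ i, f i i = 0) (h1 : ∀ i j, f i j = - f j i) : ∑ i, ∑ j, f i j = 0 := by
  rw [← Fintype.sum_prod_type']
  refine Finset.sum_involution (fun p _ => p.swap) ?_ ?_ ?_ ?_
  · rintro ⟨i, j⟩ _
    simp only [Prod.swap]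
    rw [h1 i j]; ring
  · rintro ⟨i, j⟩ _ hne heq
    simp only [Prod.swap, Prod.mk.injEq] at heq
    obtain ⟨rfl, _⟩ := heq
    exact hne (h0 _)
  · simp
  · simp

theorem step_alg {Q F1 : Type*} [CommRing Q] [IsLocalRing Q] [AddCommGroup F1] [Module Q F1]
    (d1 : F1 →ₗ[Q] Q) (e1 e2 e3 u : F1) (hr : Reg3 (d1 e1) (d1 e2) (d1 e3)) (J : Ideal Q)
    (hJ : ∀ j ∈ J, ∃ c1 c2 c3, j * d1 u = d1 e1 * c1 + d1 e2 * c2 + d1 e3 * c3)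
    (hx : d1 e1 ∈ maximalIdeal Q * J) :
    ∃ p q : Q, beta d1 e1 u - p • beta d1 e1 e2 - q • beta d1 e1 e3 ∈
      maximalIdeal Q • LinearMap.ker d1 := by
  obtain ⟨x1, hx1⟩ : ∃ t, t = d1 e1 := ⟨_, rfl⟩
  obtain ⟨x2, hx2⟩ : ∃ t, t = d1 e2 := ⟨_, rfl⟩
  obtain ⟨x3, hx3⟩ : ∃ t, t = d1 e3 := ⟨_, rfl⟩
  simp only [← hx1, ← hx2, ← hx3] at hr hJ hx
  have hrep : ∃ (r : ℕ) (a j : Fin r → Q), (∀ i, a i ∈ maximalIdeal Q) ∧ (∀ i, j i ∈ J) ∧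
      ∑ i, a i * j i = x1 := by
    rw [Submodule.mul_eq_span_mul_set] at hx
    obtain ⟨r, f, g, hfg⟩ := Submodule.mem_span_set'.1 hx
    have hg : ∀ i, ∃ a b, a ∈ maximalIdeal Q ∧ b ∈ J ∧ a * b = (g i : Q) := fun i => by
      obtain ⟨a, ha, b, hb, hab⟩ := Set.mem_mul.1 (g i).2
      exact ⟨a, b, ha, hb, hab⟩
    choose a b ha hb hab using hg
    refine ⟨r, fun i => f i * a i, b, fun i => Ideal.mul_mem_left _ _ (ha i), hb, ?_⟩
    rw [← hfg]
    refine Finset.sum_congr rfl fun i _ => ?_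
    rw [← hab, smul_eq_mul]; ring
  obtain ⟨r, a, j, ha, hj, hsum⟩ := hrep
  have hc := fun i => hJ (j i) (hj i)
  choose c1 c2 c3 hc using hc
  have hBC : ∀ l i, ∃ B C, j l * c3 i - j i * c3 l = x1 * B + x2 * C := fun l i => by
    obtain ⟨p, q, r, _, _, h⟩ := hr.koszul (a := j l * c1 i - j i * c1 l)
      (b := j l * c2 i - j i * c2 l) (c := j l * c3 i - j i * c3 l)
      (by linear_combination (-(j l)) * hc i + j i * hc l)
    exact ⟨q, r, h⟩
  choose B0 C0 hBC0 using hBC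
  obtain ⟨B, C, hBC, hC0, hC1⟩ : ∃ B C : Fin r → Fin r → Q,
      (∀ l i, j l * c3 i - j i * c3 l = x1 * B l i + x2 * C l i) ∧
      (∀ i, C i i = 0) ∧ (∀ i l, C i l = - C l i) := by
    refine ⟨fun l i => if l < i then B0 l i else if i < l then - B0 i l else 0,
      fun l i => if l < i then C0 l i else if i < l then - C0 i l else 0, ?_, ?_, ?_⟩
    · intro l i
      rcases lt_trichotomy l i with h | h | h
      · simpa [h] using hBC0 l i
      · subst h; simp
      · simp only [h, if_true, not_lt_of_gt h, if_false]
        linear_combination - hBC0 i l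
    · intro i; simp
    · intro i l
      rcases lt_trichotomy l i with h | h | h
      · simp [h, not_lt_of_gt h]
      · subst h; simp
      · simp [h, not_lt_of_gt h]
  set k1 := ∑ i, a i * c1 i with hk1
  set k2 := ∑ i, a i * c2 i with hk2
  set k3 := ∑ i, a i * c3 i with hk3
  have hk : x1 * d1 u = x1 * k1 + x2 * k2 + x3 * k3 := by
    rw [hk1, hk2, hk3]
    simp only [Finset.mul_sum]
    rw [← Finset.sum_add_distrib, ← Finset.sum_add_distrib]
    nth_rewrite 1 [← hsum]
    rw [Finset.sum_mul]
    refine Finset.sum_congr rfl fun i _ => ?_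
    linear_combination a i * hc i
  obtain ⟨p, q, s, hp1, hp2, hp3⟩ := hr.koszul (a := k1 - d1 u) (b := k2) (c := k3)
    (by linear_combination -hk)
  have hs : s ∈ maximalIdeal Q := by
    have ht : ∀ i, ∃ t, j i * s + ∑ l, a l * C l i = x1 * t := fun i => by
      have h1 : x1 * c3 i - j i * k3 = x1 * ∑ l, a l * B l i + x2 * ∑ l, a l * C l i := by
        rw [hk3]
        simp only [Finset.mul_sum]
        rw [← Finset.sum_add_distrib]
        nth_rewrite 1 [← hsum]
        rw [Finset.sum_mul, ← Finset.sum_sub_distrib]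
        refine Finset.sum_congr rfl fun l _ => ?_
        linear_combination a l * hBC l i
      obtain ⟨t, ht⟩ := hr.h2 (j i * s + ∑ l, a l * C l i)
        (c3 i - j i * q - ∑ l, a l * B l i) (by linear_combination -h1 - j i * hp3)
      exact ⟨t, ht⟩
    choose t ht using ht
    have h2 : ∑ i, a i * (j i * s + ∑ l, a l * C l i) = x1 * ∑ i, a i * t i := by
      rw [Finset.mul_sum]
      refine Finset.sum_congr rfl fun i _ => ?_
      rw [ht i]; ring
    have h3 : ∑ i, ∑ l, a i * (a l * C l i) = 0 := by
      refine antisymm_sum _ (fun i => by simp [hC0]) (fun i l => ?_)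
      rw [hC1 l i]; ring
    have h4 : x1 * (s - ∑ i, a i * t i) = 0 := by
      rw [mul_sub, ← h2, ← hsum, Finset.sum_mul, ← Finset.sum_sub_distrib]
      rw [← neg_eq_zero, ← h3, ← Finset.sum_neg_distrib]
      refine Finset.sum_congr rfl fun i _ => ?_
      rw [← Finset.mul_sum]; ring
    have h5 := hr.h1 _ h4
    rw [sub_eq_zero.1 h5]
    exact Ideal.sum_mem _ fun i _ => Ideal.mul_mem_right _ _ (ha i)
  refine ⟨p, q, ?_⟩
  have hz : ∑ i, a i • (j i • u - c1 i • e1 - c2 i • e2 - c3 i • e3) ∈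
      maximalIdeal Q • LinearMap.ker d1 := by
    refine Submodule.sum_mem _ fun i _ => Submodule.smul_mem_smul (ha i) ?_
    rw [LinearMap.mem_ker]
    simp only [map_sub, map_smul, smul_eq_mul, ← hx1, ← hx2, ← hx3]
    linear_combination hc i
  have hz' : ∑ i, a i • (j i • u - c1 i • e1 - c2 i • e2 - c3 i • e3) =
      x1 • u - k1 • e1 - k2 • e2 - k3 • e3 := by
    rw [hk1, hk2, hk3, ← hsum]
    simp only [smul_sub, Finset.sum_sub_distrib, Finset.sum_smul, smul_smul]
  have h23 : s • beta d1 e2 e3 ∈ maximalIdeal Q • LinearMap.ker d1 :=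
    Submodule.smul_mem_smul hs (LinearMap.mem_ker.2 (d1_beta _ _ _))
  rw [hz'] at hz
  have := Submodule.add_mem _ hz h23
  convert this using 1
  have e1' : k1 = d1 u - x2 * p - x3 * q := by linear_combination hp1
  rw [e1', hp2, hp3]
  simp only [beta, ← hx1, ← hx2, ← hx3]
  module

theorem mem_colon_of_h {Q F1 F2 F3 : Type*} [CommRing Q] [AddCommGroup F1] [AddCommGroup F2]
    [AddCommGroup F3] [Module Q F1] [Module Q F2] [Module Q F3]
    {d1 : F1 →ₗ[Q] Q} {d2 : F2 →ₗ[Q] F1} {d3 : F3 →ₗ[Q] F2} (hF : Res d1 d2 d3)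
    {e1 e2 e3 : F1} {f12 f13 f23 : F2} {h : F3} (h12 : d2 f12 = beta d1 e1 e2)
    (h13 : d2 f13 = beta d1 e1 e3) (h23 : d2 f23 = beta d1 e2 e3)
    (hh : d3 h = d1 e1 • f23 - d1 e2 • f13 + d1 e3 • f12) (v : F3 →ₗ[Q] Q) (u : F1) :
    ∃ c1 c2 c3, v h * d1 u = d1 e1 * c1 + d1 e2 * c2 + d1 e3 * c3 := by
  obtain ⟨g1, hg1⟩ := hF.x1 _ (d1_beta d1 e1 u)
  obtain ⟨g2, hg2⟩ := hF.x1 _ (d1_beta d1 e2 u)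
  obtain ⟨g3, hg3⟩ := hF.x1 _ (d1_beta d1 e3 u)
  obtain ⟨k1, hk1⟩ := hF.x2 (d1 e2 • g3 - d1 e3 • g2 + d1 u • f23) (by
    simp only [map_add, map_sub, map_smul, hg3, hg2, h23, beta]; module)
  obtain ⟨k2, hk2⟩ := hF.x2 (d1 e1 • g3 - d1 e3 • g1 + d1 u • f13) (by
    simp only [map_add, map_sub, map_smul, hg3, hg1, h13, beta]; module)
  obtain ⟨k3, hk3⟩ := hF.x2 (d1 e1 • g2 - d1 e2 • g1 + d1 u • f12) (by
    simp only [map_add, map_sub, map_smul, hg2, hg1, h12, beta]; module)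
  have : d1 u • h - d1 e1 • k1 + d1 e2 • k2 - d1 e3 • k3 = 0 := hF.inj _ (by
    simp only [map_add, map_sub, map_smul, hk1, hk2, hk3, hh]; module)
  have := congrArg v this
  simp only [map_add, map_sub, map_smul, smul_eq_mul, map_zero] at this
  exact ⟨v k1, - v k2, v k3, by linear_combination this⟩

theorem mem_smul_top_pi {Q : Type*} [CommRing Q] {N : ℕ} (A : Ideal Q) (f : Fin N → Q) :
    f ∈ A • (⊤ : Submodule Q (Fin N → Q)) ↔ ∀ i, f i ∈ A := by
  constructor
  · intro h i
    refine Submodule.smul_induction_on h ?_ ?_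
    · intro r hr n _
      exact A.mul_mem_right _ hr
    · intro x y hx hy
      exact A.add_mem hx hy
  · intro h
    rw [pi_eq_sum_univ' f]
    exact Submodule.sum_mem _ fun i _ => Submodule.smul_mem_smul (h i) trivial

theorem dichotomy {Q : Type*} [CommRing Q] [IsLocalRing Q] {N : ℕ}
    (f12 f13 f23 : Fin N → Q) :
    (∃ b c : Q, f23 + b • f13 + c • f12 ∈ maximalIdeal Q • (⊤ : Submodule Q (Fin N → Q))) ∨
    (∃ ξ : (Fin N → Q) →ₗ[Q] Q, IsUnit (ξ f23) ∧ ξ f12 ∈ maximalIdeal Q ∧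
      ξ f13 ∈ maximalIdeal Q) := by
  let k := ResidueField Q
  let π : (Fin N → Q) → (Fin N → k) := fun f i => residue Q (f i)
  by_cases hm : π f23 ∈ Submodule.span k {π f13, π f12}
  · left
    obtain ⟨b, c, hbc⟩ := Submodule.mem_span_pair.1 hm
    obtain ⟨b, rfl⟩ := residue_surjective b
    obtain ⟨c, rfl⟩ := residue_surjective c
    refine ⟨-b, -c, (mem_smul_top_pi _ _).2 fun i => ?_⟩
    rw [← residue_eq_zero_iff]
    have := congrFun hbc i
    simp only [π, Pi.add_apply, Pi.smul_apply, smul_eq_mul] at this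
    simp only [Pi.add_apply, Pi.smul_apply, smul_eq_mul, map_add, map_mul, map_neg, ← this]
    ring
  · right
    obtain ⟨g, hg, hg'⟩ := Submodule.exists_le_ker_of_notMem hm
    have hs := fun i => residue_surjective (R := Q) (g (Pi.single i 1))
    choose t ht using hs
    let ξ : (Fin N → Q) →ₗ[Q] Q := Fintype.linearCombination Q t
    have key : ∀ f, residue Q (ξ f) = g (π f) := fun f => by
      rw [pi_eq_sum_univ' (π f)]
      simp only [ξ, Fintype.linearCombination_apply, map_sum, map_smul, smul_eq_mul, map_mul, ht]
      refine Finset.sum_congr rfl fun i _ => ?_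
      congr 2
    refine ⟨ξ, ?_, ?_, ?_⟩
    · rw [← residue_ne_zero_iff_isUnit, key]
      exact hg
    · rw [← residue_eq_zero_iff, key]
      exact hg' (Submodule.subset_span (by simp))
    · rw [← residue_eq_zero_iff, key]
      exact hg' (Submodule.subset_span (by simp))

end Part2
section Part3

open IsLocalRing

theorem mem_colon_triple {Q F1 : Type*} [CommRing Q] [AddCommGroup F1] [Module Q F1]
    (d1 : F1 →ₗ[Q] Q) (x y z j : Q) :
    j ∈ Submodule.colon (Ideal.span {x, y, z}) (LinearMap.range d1 : Ideal Q) ↔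
      ∀ u, ∃ c1 c2 c3, j * d1 u = x * c1 + y * c2 + z * c3 := by
  have key : ∀ t : Q, t ∈ Ideal.span {x, y, z} ↔ ∃ c1 c2 c3, t = x * c1 + y * c2 + z * c3 := by
    intro t
    simp only [Ideal.mem_span_insert, Ideal.mem_span_singleton']
    constructor
    · rintro ⟨a, _, ⟨b, _, ⟨c, rfl⟩, rfl⟩, rfl⟩
      exact ⟨a, b, c, by ring⟩
    · rintro ⟨a, b, c, rfl⟩
      exact ⟨a, _, ⟨b, _, ⟨c, rfl⟩, rfl⟩, by ring⟩
  rw [Submodule.mem_colon]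
  constructor
  · intro h u
    exact (key _).1 (h (d1 u) ⟨u, rfl⟩)
  · rintro h _ ⟨u, rfl⟩
    exact (key _).2 (h u)

theorem apply_mem_of_mem_smul_top {Q M : Type*} [CommRing Q] [AddCommGroup M] [Module Q M]
    (A : Ideal Q) (φ : M →ₗ[Q] Q) {f : M} (hf : f ∈ A • (⊤ : Submodule Q M)) : φ f ∈ A := by
  refine Submodule.smul_induction_on hf ?_ ?_
  · intro r hr n _
    rw [map_smul]
    exact A.mul_mem_right _ hr
  · intro x y hx hy
    rw [map_add]; exact A.add_mem hx hy

theorem mem_smul_range {Q M N : Type*} [CommRing Q] [AddCommGroup M] [Module Q M]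
    [AddCommGroup N] [Module Q N] (A : Ideal Q) (d : M →ₗ[Q] N) (x : N) :
    x ∈ A • LinearMap.range d ↔ ∃ t ∈ A • (⊤ : Submodule Q M), d t = x := by
  rw [LinearMap.range_eq_map, ← Submodule.map_smul'', Submodule.mem_map]

theorem exists_pair {Q : Type*} [CommRing Q] [IsNoetherianRing Q] [IsLocalRing Q] {m n N : ℕ}
    (hm : 4 ≤ m)
    {d1 : (Fin m → Q) →ₗ[Q] Q} {d2 : (Fin N → Q) →ₗ[Q] (Fin m → Q)}
    {d3 : (Fin n → Q) →ₗ[Q] (Fin N → Q)} (hF : Res d1 d2 d3)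
    (hI : LinearMap.range d1 ≤ maximalIdeal Q)
    (hd3 : ∀ w, d3 w ∈ maximalIdeal Q • (⊤ : Submodule Q (Fin N → Q)))
    {x y z : Q} (hx : x ∈ LinearMap.range d1) (hy : y ∈ LinearMap.range d1)
    (hz : z ∈ LinearMap.range d1) (hr : Reg3 x y z) :
    ∃ (u v : Fin m → Q) (φ1 φ2 : (Fin m → Q) →ₗ[Q] Q), IsUnit (φ1 u * φ2 v - φ1 v * φ2 u) ∧
      beta d1 u v ∈ maximalIdeal Q • LinearMap.ker d1 := by
  have hker : LinearMap.ker d1 = LinearMap.range d2 := by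
    ext z; exact ⟨fun h => hF.x1 z h, fun ⟨w, hw⟩ => by rw [← hw]; exact hF.c1 w⟩
  let i0 : Fin m := ⟨0, by omega⟩
  let i1 : Fin m := ⟨1, by omega⟩
  let i2 : Fin m := ⟨2, by omega⟩
  let i3 : Fin m := ⟨3, by omega⟩
  let b : Fin m → (Fin m → Q) := fun i => Pi.single i 1
  obtain ⟨w1, hw1, w2, hw2, w3, hw3, hreg⟩ := exists_reg3 (LinearMap.range d1) hI hx hy hz hr
    (d1 (b i0)) (d1 (b i1)) (d1 (b i2))
  obtain ⟨t1, ht1, rfl⟩ := (mem_smul_range _ d1 _).1 hw1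
  obtain ⟨t2, ht2, rfl⟩ := (mem_smul_range _ d1 _).1 hw2
  obtain ⟨t3, ht3, rfl⟩ := (mem_smul_range _ d1 _).1 hw3
  rw [← map_add, ← map_add, ← map_add] at hreg
  have hres : ∀ (i j : Fin m) (t : Fin m → Q), t ∈ maximalIdeal Q • (⊤ : Submodule Q (Fin m → Q)) →
      residue Q ((b i + t) j) = if j = i then 1 else 0 := fun i j t ht => by
    have : residue Q (t j) = 0 := (residue_eq_zero_iff _).2 ((mem_smul_top_pi _ _).1 ht j)
    simp only [Pi.add_apply, map_add, this, b, Pi.single_apply, add_zero]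
    split_ifs <;> simp
  have r1 := fun j => hres i0 j t1 ht1
  have r2 := fun j => hres i1 j t2 ht2
  have r3 := fun j => hres i2 j t3 ht3
  have r4 := fun j => hres i3 j 0 (Submodule.zero_mem _)
  generalize b i0 + t1 = e1 at *
  generalize b i1 + t2 = e2 at *
  generalize b i2 + t3 = e3 at *
  generalize b i3 + 0 = e4 at *
  obtain ⟨f12, h12⟩ := hF.x1 _ (d1_beta d1 e1 e2)
  obtain ⟨f13, h13⟩ := hF.x1 _ (d1_beta d1 e1 e3)
  obtain ⟨f23, h23⟩ := hF.x1 _ (d1_beta d1 e2 e3)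
  rcases dichotomy f12 f13 f23 with ⟨p, c, hpc⟩ | ⟨ξ, hξ1, hξ2, hξ3⟩
  · refine ⟨e2 + p • e1, e3 - c • e1, LinearMap.proj i1, LinearMap.proj i2, ?_, ?_⟩
    · rw [← residue_ne_zero_iff_isUnit]
      simp [r1, r2, r3, i0, i1, i2]
    · rw [hker]
      refine (mem_smul_range _ d2 _).2 ⟨_, hpc, ?_⟩
      simp only [map_add, map_smul, h12, h13, h23, beta, map_sub, smul_eq_mul]
      module
  · obtain ⟨h, hh⟩ := hF.x2 (d1 e1 • f23 - d1 e2 • f13 + d1 e3 • f12) (by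
      simp only [map_add, map_sub, map_smul, h12, h23, h13, beta]; module)
    let J : Ideal Q := Submodule.colon (Ideal.span {d1 e1, d1 e2, d1 e3})
      (LinearMap.range d1 : Ideal Q)
    have hJ : ∀ j, j ∈ J ↔ ∀ u, ∃ c1 c2 c3, j * d1 u = d1 e1 * c1 + d1 e2 * c2 + d1 e3 * c3 :=
      fun j => mem_colon_triple d1 _ _ _ j
    have hx2 : d1 e2 ∈ J := (hJ _).2 fun u => ⟨0, d1 u, 0, by ring⟩
    have hx3 : d1 e3 ∈ J := (hJ _).2 fun u => ⟨0, 0, d1 u, by ring⟩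
    have hsum : ξ (d3 h) ∈ maximalIdeal Q * J := by
      rw [pi_eq_sum_univ' h]
      simp only [map_sum, map_smul, smul_eq_mul]
      refine Ideal.sum_mem _ fun i _ => ?_
      rw [mul_comm (h i)]
      refine Ideal.mul_mem_mul (apply_mem_of_mem_smul_top _ ξ (hd3 _)) ?_
      exact (hJ _).2 fun u => mem_colon_of_h hF h12 h13 h23 hh (LinearMap.proj i) u
    have hx1 : d1 e1 ∈ maximalIdeal Q * J := by
      rw [hh] at hsum
      simp only [map_add, map_sub, map_smul, smul_eq_mul] at hsum
      have h4 : ξ f23 * d1 e1 ∈ maximalIdeal Q * J := by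
        have h5 := Ideal.mul_mem_mul hξ3 hx2
        have h6 := Ideal.mul_mem_mul hξ2 hx3
        have := Ideal.sub_mem _ (Ideal.add_mem _ hsum h5) h6
        convert this using 1; ring
      exact (Ideal.unit_mul_mem_iff_mem _ hξ1).1 h4
    obtain ⟨p, q, hpq⟩ := step_alg d1 e1 e2 e3 e4 hreg J (fun j hj => (hJ j).1 hj e4) hx1
    refine ⟨e1, e4 - p • e2 - q • e3, LinearMap.proj i0, LinearMap.proj i3, ?_, ?_⟩
    · rw [← residue_ne_zero_iff_isUnit]
      simp [r1, r2, r3, r4, i0, i1, i2, i3]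
    · convert hpq using 1
      simp only [beta, map_sub, map_smul, smul_eq_mul]
      module

end Part3
section Part4

variable {Q F1 F2 F3 : Type*} [CommRing Q] [AddCommGroup F1] [AddCommGroup F2]
    [AddCommGroup F3] [Module Q F1] [Module Q F2] [Module Q F3]

theorem lift_of {F M N : Type*} [AddCommGroup F] [AddCommGroup M] [AddCommGroup N]
    [Module Q F] [Module Q M] [Module Q N] [Module.Projective Q F]
    (f : F →ₗ[Q] M) (g : N →ₗ[Q] M) (h : ∀ u, ∃ w, g w = f u) :
    ∃ f' : F →ₗ[Q] N, ∀ u, g (f' u) = f u := by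
  obtain ⟨f', hf'⟩ := Module.projective_lifting_property g.rangeRestrict
    (f.codRestrict (LinearMap.range g) h) g.surjective_rangeRestrict
  refine ⟨f', fun u => ?_⟩
  have := congrArg Subtype.val (LinearMap.congr_fun hf' u)
  exact this

theorem lift_mul {F : Type*} [AddCommGroup F] [Module Q F] [Module.Projective Q F]
    (f : F →ₗ[Q] Q) (x : Q) (h : ∀ u, ∃ c, f u = x * c) :
    ∃ f' : F →ₗ[Q] Q, ∀ u, f u = x * f' u := by
  obtain ⟨f', hf'⟩ := lift_of f (x • (LinearMap.id : Q →ₗ[Q] Q))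
    (fun u => (h u).imp fun c hc => by simp [hc])
  exact ⟨f', fun u => by rw [← hf']; simp⟩

theorem exists_s [Module.Projective Q F1]
    {d1 : F1 →ₗ[Q] Q} {d2 : F2 →ₗ[Q] F1} {d3 : F3 →ₗ[Q] F2} (hF : Res d1 d2 d3)
    (e1 e2 : F1) (φ1 φ2 : F1 →ₗ[Q] Q) (h11 : φ1 e1 = 1) (h12 : φ1 e2 = 0)
    (h21 : φ2 e1 = 0) (h22 : φ2 e2 = 1) :
    ∃ s1 s2 : F1 →ₗ[Q] F2, (∀ u, d2 (s1 u) = beta d1 e1 u) ∧ (∀ u, d2 (s2 u) = beta d1 e2 u) ∧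
      s1 e1 = 0 ∧ s2 e2 = 0 ∧ s2 e1 = - s1 e2 := by
  have hl : ∀ e : F1, ∃ s : F1 →ₗ[Q] F2, ∀ u, d2 (s u) = beta d1 e u := fun e => by
    obtain ⟨s, hs⟩ := lift_of (d1 e • LinearMap.id - d1.smulRight e) d2 (fun u =>
      hF.x1 _ (by simp; ring))
    exact ⟨s, fun u => by rw [hs]; simp [beta]⟩
  obtain ⟨s, hs⟩ := hl e1
  obtain ⟨t, ht⟩ := hl e2
  have hs1 : ∀ u, d2 ((s - φ1.smulRight (s e1)) u) = beta d1 e1 u := fun u => by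
    simp [hs, beta]
  refine ⟨s - φ1.smulRight (s e1),
    t - φ1.smulRight (t e1 + (s - φ1.smulRight (s e1)) e2) - φ2.smulRight (t e2), hs1, ?_, ?_,
    ?_, ?_⟩
  · intro u
    simp only [LinearMap.sub_apply, LinearMap.smulRight_apply, map_sub, map_smul, map_add, ht, hs,
      beta, h12]
    module
  · simp [h11]
  · simp [h12, h22]
  · simp [h11, h12, h21]

theorem exG3 {d1 : F1 →ₗ[Q] Q} {d2 : F2 →ₗ[Q] F1} {d3 : F3 →ₗ[Q] F2} (hF : Res d1 d2 d3)
    {e1 : F1} (hx : ∀ a, d1 e1 * a = 0 → a = 0) (φ : F1 →ₗ[Q] Q) (h : ∀ w, φ (d2 w) = 0)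
    (h1 : φ e1 = 0) : φ = 0 := by
  ext u
  obtain ⟨g, hg⟩ := hF.x1 _ (d1_beta d1 e1 u)
  have := h g
  rw [hg] at this
  simp only [beta, map_sub, map_smul, h1, smul_eq_mul] at this
  exact hx _ (by linear_combination this)

theorem exG2 [Module.Projective Q F1]
    {d1 : F1 →ₗ[Q] Q} {d2 : F2 →ₗ[Q] F1} {d3 : F3 →ₗ[Q] F2} (hF : Res d1 d2 d3)
    {e1 e2 e3 : F1} (hr : Reg3 (d1 e1) (d1 e2) (d1 e3)) {s1 s2 : F1 →ₗ[Q] F2}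
    (hs1 : ∀ u, d2 (s1 u) = beta d1 e1 u) (hs2 : ∀ u, d2 (s2 u) = beta d1 e2 u)
    (h11 : s1 e1 = 0)
    (ψ : F2 →ₗ[Q] Q) (c1 c2 c3 : Q) (hψ : ∀ w, ψ (d3 w) = 0)
    (h12 : ψ (s1 e2) = d1 e1 * c2 - d1 e2 * c1) (h13 : ψ (s1 e3) = d1 e1 * c3 - d1 e3 * c1) :
    ∃ φ : F1 →ₗ[Q] Q, (∀ w, φ (d2 w) = ψ w) ∧ φ e1 = c1 ∧ φ e2 = c2 ∧ φ e3 = c3 := by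
  have hk : ∀ w, d2 w = 0 → ψ w = 0 := fun w hw => by
    obtain ⟨t, rfl⟩ := hF.x2 w hw
    exact hψ t
  obtain ⟨φ, hφ⟩ := lift_mul (ψ ∘ₗ s1 + c1 • d1) (d1 e1) (fun u => by
    have := hk (d1 e2 • s1 u - d1 e1 • s2 u - d1 u • s1 e2) (by
      simp only [map_sub, map_smul, hs1, hs2, beta]; module)
    simp only [map_sub, map_smul, smul_eq_mul, h12] at this
    apply hr.h2 _ (ψ (s2 u) + d1 u * c2)
    simp
    linear_combination this)
  have hφ' : ∀ u, ψ (s1 u) + c1 * d1 u = d1 e1 * φ u := fun u => by simpa using hφ u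
  have cancel : ∀ a b, d1 e1 * a = d1 e1 * b → a = b := fun a b h =>
    sub_eq_zero.1 (hr.h1 _ (by linear_combination h))
  refine ⟨φ, fun w => ?_, ?_, ?_, ?_⟩
  · apply cancel
    rw [← hφ']
    have := hk (s1 (d2 w) - d1 e1 • w) (by
      simp only [map_sub, map_smul, hs1, beta, hF.c1]; module)
    simp only [map_sub, map_smul, smul_eq_mul] at this
    rw [hF.c1]
    linear_combination this
  · apply cancel
    rw [← hφ', h11, map_zero]; ring
  · apply cancel
    rw [← hφ', h12]; ring
  · apply cancel
    rw [← hφ', h13]; ring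

theorem exG1 [Module.Projective Q F1] [Module.Projective Q F2]
    {d1 : F1 →ₗ[Q] Q} {d2 : F2 →ₗ[Q] F1} {d3 : F3 →ₗ[Q] F2} (hF : Res d1 d2 d3)
    {e1 e2 e3 : F1} (hr : Reg3 (d1 e1) (d1 e2) (d1 e3)) {s1 s2 : F1 →ₗ[Q] F2}
    (hs1 : ∀ u, d2 (s1 u) = beta d1 e1 u) (hs2 : ∀ u, d2 (s2 u) = beta d1 e2 u)
    (h11 : s1 e1 = 0) (h22 : s2 e2 = 0) (h21 : s2 e1 = - s1 e2) {h : F3}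
    (hh : d3 h = d1 e1 • s2 e3 - d1 e2 • s1 e3 + d1 e3 • s1 e2)
    (v : F3 →ₗ[Q] Q) (p12 p13 p23 : Q)
    (hv : v h = d1 e1 * p23 - d1 e2 * p13 + d1 e3 * p12) :
    ∃ (ψ : F2 →ₗ[Q] Q) (c1 c2 c3 : Q), (∀ w, ψ (d3 w) = v w) ∧
      ψ (s1 e2) = p12 + (d1 e1 * c2 - d1 e2 * c1) ∧
      ψ (s1 e3) = p13 + (d1 e1 * c3 - d1 e3 * c1) ∧
      ψ (s2 e3) = p23 + (d1 e2 * c3 - d1 e3 * c2) := by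
  have hinj : ∀ a b, d3 a = d3 b → a = b := fun a b hab =>
    sub_eq_zero.1 (hF.inj _ (by rw [map_sub, hab, sub_self]))
  obtain ⟨t1, ht1⟩ := lift_of (d1 e1 • LinearMap.id - s1 ∘ₗ d2) d3 (fun w => hF.x2 _ (by
    simp [hs1, beta, hF.c1]))
  obtain ⟨t2, ht2⟩ := lift_of (d1 e2 • LinearMap.id - s2 ∘ₗ d2) d3 (fun w => hF.x2 _ (by
    simp [hs2, beta, hF.c1]))
  simp only [LinearMap.sub_apply, LinearMap.smul_apply, LinearMap.id_apply,
    LinearMap.comp_apply] at ht1 ht2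
  have t1d : ∀ w, t1 (d3 w) = d1 e1 • w := fun w => hinj _ _ (by
    rw [ht1, hF.c2]; simp)
  have t2d : ∀ w, t2 (d3 w) = d1 e2 • w := fun w => hinj _ _ (by
    rw [ht2, hF.c2]; simp)
  have a12 : t1 (s1 e2) = 0 := hinj _ _ (by
    rw [ht1, hs1]; simp [beta, h11])
  have a13 : t1 (s1 e3) = 0 := hinj _ _ (by
    rw [ht1, hs1]; simp [beta, h11])
  have a23 : t1 (s2 e3) = h := hinj _ _ (by
    rw [ht1, hs2, hh]; simp only [beta, map_sub, map_smul]; module)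
  have b12 : t2 (s1 e2) = 0 := hinj _ _ (by
    rw [ht2, hs1]; simp only [beta, map_sub, map_smul, h22, h21, map_zero]; module)
  have b13 : t2 (s1 e3) = - h := hinj _ _ (by
    rw [ht2, hs1, map_neg, hh]; simp only [beta, map_sub, map_smul, h21]; module)
  have b23 : t2 (s2 e3) = 0 := hinj _ _ (by
    rw [ht2, hs2]; simp [beta, h22])
  obtain ⟨φ, hφ, φe1, φe2, φe3⟩ := exG2 hF hr hs1 hs2 h11
    (d1 e2 • (v ∘ₗ t1) - d1 e1 • (v ∘ₗ t2)) 0 0 (v h)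
    (fun w => by
      simp only [LinearMap.sub_apply, LinearMap.smul_apply, LinearMap.comp_apply, t1d, t2d,
        map_smul, smul_eq_mul]
      ring)
    (by simp [a12, b12]) (by simp [a13, b13])
  simp only [LinearMap.sub_apply, LinearMap.smul_apply, LinearMap.comp_apply, smul_eq_mul] at hφ
  obtain ⟨Φ, hΦ⟩ := lift_of (φ - p12 • d1)
    ((d1 e1 • LinearMap.id : Q →ₗ[Q] Q).coprod (d1 e2 • LinearMap.id)) (fun u => by
      obtain ⟨g, hg⟩ := hF.x1 _ (d1_beta d1 e3 u)
      have h1 := hφ g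
      rw [hg] at h1
      simp only [beta, map_sub, map_smul, smul_eq_mul, φe3] at h1
      obtain ⟨d, e, hde⟩ := hr.h3 (φ u - p12 * d1 u) (d1 u * p23 - v (t2 g))
        (v (t1 g) - d1 u * p13) (by linear_combination h1 + d1 u * hv)
      exact ⟨(d, e), by simp [hde]⟩)
  have hΦ' : ∀ u, φ u = p12 * d1 u + d1 e1 * (Φ u).1 + d1 e2 * (Φ u).2 := fun u => by
    have := hΦ u
    simp at this
    linear_combination -this
  let φA : F1 →ₗ[Q] Q := LinearMap.fst Q Q Q ∘ₗ Φ
  let φB : F1 →ₗ[Q] Q := LinearMap.snd Q Q Q ∘ₗ Φ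
  have hAB : ∀ u, φ u = p12 * d1 u + d1 e1 * φA u + d1 e2 * φB u := hΦ'
  clear_value φA φB
  obtain ⟨ψ, hψ⟩ := lift_mul (v ∘ₗ t1 - φB ∘ₗ d2) (d1 e1) (fun w => by
    refine hr.h2 _ (v (t2 w) + φA (d2 w)) ?_
    have h1 := hφ w
    rw [hAB, hF.c1] at h1
    simp only [LinearMap.sub_apply, LinearMap.comp_apply]
    linear_combination -h1)
  simp only [LinearMap.sub_apply, LinearMap.comp_apply] at hψ
  have cancel : ∀ a b, d1 e1 * a = d1 e1 * b → a = b := fun a b h =>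
    sub_eq_zero.1 (hr.h1 _ (by linear_combination h))
  have E1 := hAB e1
  have E2 := hAB e2
  have E3 := hAB e3
  rw [φe1] at E1
  rw [φe2] at E2
  rw [φe3, hv] at E3
  obtain ⟨t, ht⟩ := hr.h2 (φB e1) (-(p12 + φA e1)) (by linear_combination -E1)
  obtain ⟨w, hw⟩ := hr.h2 (p12 + φB e2) (-(φA e2)) (by linear_combination -E2)
  obtain ⟨y, hy⟩ := hr.h2 (φB e3 + p13) (p23 - φA e3) (by linear_combination -E3)
  have hy' : p23 - φA e3 = d1 e2 * y := cancel _ _ (by linear_combination E3 + d1 e2 * hy)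
  refine ⟨ψ, -t, -w, -y, fun w => ?_, ?_, ?_, ?_⟩
  · apply cancel
    rw [← hψ, t1d, hF.c2]
    simp
  · apply cancel
    rw [← hψ, a12, hs1]
    simp only [beta, map_sub, map_smul, smul_eq_mul, map_zero]
    linear_combination d1 e2 * ht - d1 e1 * hw
  · apply cancel
    rw [← hψ, a13, hs1]
    simp only [beta, map_sub, map_smul, smul_eq_mul, map_zero]
    linear_combination d1 e3 * ht - d1 e1 * hy
  · apply cancel
    rw [← hψ, a23, hs2]
    simp only [beta, map_sub, map_smul, smul_eq_mul, hv]
    linear_combination E3 + d1 e3 * hw - d1 e1 * hy'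

theorem exG0 [Module.Projective Q F1] [Module.Projective Q F2] [Module.Projective Q F3]
    {d1 : F1 →ₗ[Q] Q} {d2 : F2 →ₗ[Q] F1} {d3 : F3 →ₗ[Q] F2} (hF : Res d1 d2 d3)
    {e1 e2 e3 : F1} (hr : Reg3 (d1 e1) (d1 e2) (d1 e3)) {f12 f13 f23 : F2} {h : F3}
    (h12 : d2 f12 = beta d1 e1 e2)
    (h13 : d2 f13 = beta d1 e1 e3) (h23 : d2 f23 = beta d1 e2 e3)
    (hh : d3 h = d1 e1 • f23 - d1 e2 • f13 + d1 e3 • f12) (a : Q)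
    (ha : ∀ u, ∃ c1 c2 c3, a * d1 u = d1 e1 * c1 + d1 e2 * c2 + d1 e3 * c3) :
    ∃ (v : F3 →ₗ[Q] Q) (p12 p13 p23 : Q),
      a = v h - (d1 e1 * p23 - d1 e2 * p13 + d1 e3 * p12) := by
  have cancel : ∀ a b, d1 e1 * a = d1 e1 * b → a = b := fun a b h =>
    sub_eq_zero.1 (hr.h1 _ (by linear_combination h))
  obtain ⟨x1, hx1⟩ : ∃ t, t = d1 e1 := ⟨_, rfl⟩
  obtain ⟨x2, hx2⟩ : ∃ t, t = d1 e2 := ⟨_, rfl⟩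
  obtain ⟨x3, hx3⟩ : ∃ t, t = d1 e3 := ⟨_, rfl⟩
  simp only [beta] at h12 h13 h23
  simp only [← hx1, ← hx2, ← hx3] at hr h12 h13 h23 hh ha cancel ⊢
  let m : Q → (Q →ₗ[Q] Q) := fun x => x • LinearMap.id
  obtain ⟨γ, hγ⟩ := lift_of (a • d1) ((m x1).coprod ((m x2).coprod (m x3))) (fun u => by
    obtain ⟨c1, c2, c3, hc⟩ := ha u
    exact ⟨(c1, c2, c3), by simp [m, hc]; ring⟩)
  have hγ' : ∀ u, a * d1 u = x1 * (γ u).1 + x2 * (γ u).2.1 + x3 * (γ u).2.2 := fun u => by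
    have := hγ u
    simp [m] at this
    linear_combination -this
  obtain ⟨κ, hκ⟩ : ∃ κ : (Q × Q × Q) →ₗ[Q] (Q × Q × Q), ∀ p q r, κ (p, q, r) =
      (- (x2 * p) - x3 * q, x1 * p - x3 * r, x1 * q + x2 * r) :=
    ⟨{ toFun := fun t => (- (x2 * t.1) - x3 * t.2.1, x1 * t.1 - x3 * t.2.2,
          x1 * t.2.1 + x2 * t.2.2)
       map_add' := fun s t => by
        refine Prod.ext ?_ (Prod.ext ?_ ?_) <;> simp <;> ring
       map_smul' := fun s t => by
        refine Prod.ext ?_ (Prod.ext ?_ ?_) <;> simp <;> ring }, fun p q r => rfl⟩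
  obtain ⟨δ, hδ⟩ := lift_of (γ ∘ₗ d2) κ (fun w => by
    have := hγ' (d2 w)
    rw [hF.c1, mul_zero] at this
    obtain ⟨p, q, r, h1, h2, h3⟩ := hr.koszul this.symm
    refine ⟨(p, q, r), ?_⟩
    rw [hκ, ← h1, ← h2, ← h3]; rfl)
  have hδ3 : ∀ w, (γ (d2 w)).2.2 = x1 * (δ w).2.1 + x2 * (δ w).2.2 := fun w => by
    have := hδ w
    rw [← Prod.mk.eta (p := δ w), ← Prod.mk.eta (p := (δ w).2), hκ] at this
    have := congrArg (fun t => t.2.2) this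
    exact this.symm
  let γ3 : F1 →ₗ[Q] Q := LinearMap.snd Q Q Q ∘ₗ LinearMap.snd Q Q (Q × Q) ∘ₗ γ
  let q : F2 →ₗ[Q] Q := LinearMap.fst Q Q Q ∘ₗ LinearMap.snd Q Q (Q × Q) ∘ₗ δ
  let r : F2 →ₗ[Q] Q := LinearMap.snd Q Q Q ∘ₗ LinearMap.snd Q Q (Q × Q) ∘ₗ δ
  have hq : ∀ w, γ3 (d2 w) = x1 * q w + x2 * r w := hδ3
  have hcol : ∀ u, ∃ c1 c2, a * d1 u = x1 * c1 + x2 * c2 + x3 * γ3 u := fun u =>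
    ⟨_, _, hγ' u⟩
  clear_value γ3 q r
  obtain ⟨v, hv⟩ := lift_mul (r ∘ₗ d3) x1 (fun w => by
    have := hq (d3 w)
    rw [hF.c2, map_zero] at this
    exact hr.h2 _ (- q (d3 w)) (by simp only [LinearMap.comp_apply]; linear_combination -this))
  have hvh := hv h
  simp only [LinearMap.comp_apply, hh, map_add, map_sub, map_smul, smul_eq_mul] at hvh
  have Q12 := hq f12
  have Q13 := hq f13
  have Q23 := hq f23
  rw [h12] at Q12
  rw [h13] at Q13
  rw [h23] at Q23
  simp only [map_sub, map_smul, smul_eq_mul] at Q12 Q13 Q23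
  have k1 : ∃ A R, γ3 e1 = x1 * A + x2 * R := by
    obtain ⟨c1, c2, hc⟩ := hcol e1
    rw [← hx1] at hc
    exact hr.h3 _ (a - c1) (-c2) (by linear_combination -hc)
  have k2 : ∃ A R, γ3 e2 = x1 * A + x2 * R := by
    obtain ⟨c1, c2, hc⟩ := hcol e2
    rw [← hx2] at hc
    exact hr.h3 _ (-c1) (a - c2) (by linear_combination -hc)
  have k3 : ∃ A R, γ3 e3 - a = x1 * A + x2 * R := by
    obtain ⟨c1, c2, hc⟩ := hcol e3
    rw [← hx3] at hc
    exact hr.h3 _ (-c1) (-c2) (by linear_combination -hc)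
  obtain ⟨A1, R1, k1⟩ := k1
  obtain ⟨A2, R2, k2⟩ := k2
  obtain ⟨A3, R3, k3⟩ := k3
  obtain ⟨τ12, T12⟩ := hr.h2 (r f12 - x1 * R2 + x2 * R1) (x1 * A2 - x2 * A1 - q f12)
    (by linear_combination -Q12 + x1 * k2 - x2 * k1)
  obtain ⟨τ13, T13⟩ := hr.h2 (r f13 - x1 * R3 + x3 * R1) (a + x1 * A3 - x3 * A1 - q f13)
    (by linear_combination -Q13 + x1 * k3 - x3 * k1)
  obtain ⟨τ23, T23⟩ := hr.h2 (r f23 - a - x2 * R3 + x3 * R2) (x2 * A3 - x3 * A2 - q f23)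
    (by linear_combination -Q23 + x2 * k3 - x3 * k2)
  refine ⟨v, τ12, τ13, τ23, cancel _ _ ?_⟩
  linear_combination hvh - x1 * T23 + x2 * T13 - x3 * T12

end Part4
section Part5

open IsLocalRing

theorem map_mem_smul_top' {Q M N : Type*} [CommRing Q] [AddCommGroup M] [Module Q M]
    [AddCommGroup N] [Module Q N] (A : Ideal Q) (f : M →ₗ[Q] N) {x : M}
    (hx : x ∈ A • (⊤ : Submodule Q M)) : f x ∈ A • (⊤ : Submodule Q N) := by
  have : f x ∈ (A • (⊤ : Submodule Q M)).map f := Submodule.mem_map_of_mem hx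
  rw [Submodule.map_smul''] at this
  exact Submodule.smul_mono le_rfl le_top this

theorem prod_mem_smul_top {Q M N : Type*} [CommRing Q] [AddCommGroup M] [Module Q M]
    [AddCommGroup N] [Module Q N] (A : Ideal Q) {x : M} {y : N}
    (hx : x ∈ A • (⊤ : Submodule Q M)) (hy : y ∈ A • (⊤ : Submodule Q N)) :
    (x, y) ∈ A • (⊤ : Submodule Q (M × N)) := by
  have h1 := map_mem_smul_top' A (LinearMap.inl Q M N) hx
  have h2 := map_mem_smul_top' A (LinearMap.inr Q M N) hy
  simpa using Submodule.add_mem _ h1 h2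

theorem self_mem_smul_top {Q : Type*} [CommRing Q] (A : Ideal Q) {x : Q}
    (hx : x ∈ A) : x ∈ A • (⊤ : Submodule Q Q) := by
  simpa using hx

theorem dual_mem_smul_top {Q : Type*} [CommRing Q] {N : ℕ} (A : Ideal Q)
    (v : (Fin N → Q) →ₗ[Q] Q) (hv : ∀ w, v w ∈ A) :
    v ∈ A • (⊤ : Submodule Q ((Fin N → Q) →ₗ[Q] Q)) := by
  have : v = ∑ i, v (Pi.single i 1) • (LinearMap.proj i : (Fin N → Q) →ₗ[Q] Q) := by
    refine LinearMap.ext fun w => ?_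
    conv_lhs => rw [pi_eq_sum_univ' w]
    simp [mul_comm]
  rw [this]
  exact Submodule.sum_mem _ fun i _ => Submodule.smul_mem_smul (hv _) trivial

theorem beta_mem {Q F1 : Type*} [CommRing Q] [AddCommGroup F1] [Module Q F1]
    (A : Ideal Q) (d1 : F1 →ₗ[Q] Q) {a : F1} (ha : a ∈ A • (⊤ : Submodule Q F1)) (v : F1) :
    beta d1 a v ∈ A • LinearMap.ker d1 := by
  refine Submodule.smul_induction_on ha ?_ ?_
  · intro r hr n _
    have : beta d1 (r • n) v = r • beta d1 n v := by
      simp only [beta, map_smul, smul_eq_mul]; module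
    rw [this]
    exact Submodule.smul_mem_smul hr (d1_beta d1 n v)
  · intro x y hx hy
    have : beta d1 (x + y) v = beta d1 x v + beta d1 y v := by
      simp only [beta, map_add]; module
    rw [this]
    exact Submodule.add_mem _ hx hy

theorem beta_mem' {Q F1 : Type*} [CommRing Q] [AddCommGroup F1] [Module Q F1]
    (A : Ideal Q) (d1 : F1 →ₗ[Q] Q) {a : F1} (ha : a ∈ A • (⊤ : Submodule Q F1)) (v : F1) :
    beta d1 v a ∈ A • LinearMap.ker d1 := by
  have : beta d1 v a = - beta d1 a v := by simp only [beta]; module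
  rw [this]
  exact Submodule.neg_mem _ (beta_mem A d1 ha v)

theorem format_of {Q M1 M2 M3 : Type*} [CommRing Q] [IsLocalRing Q] [AddCommGroup M1]
    [AddCommGroup M2] [AddCommGroup M3] [Module Q M1] [Module Q M2] [Module Q M3]
    [Module.Free Q M1] [Module.Free Q M2] [Module.Free Q M3]
    [Module.Finite Q M1] [Module.Finite Q M2] [Module.Finite Q M3] {a b : ℕ}
    (r1 : Module.finrank Q M1 = a) (r2 : Module.finrank Q M2 = a + b - 1)
    (r3 : Module.finrank Q M3 = b)
    {D1 : M1 →ₗ[Q] Q} {D2 : M2 →ₗ[Q] M1} {D3 : M3 →ₗ[Q] M2} (hR : Res D1 D2 D3)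
    (J : Ideal Q) (hJ : ∀ j, j ∈ J ↔ ∃ w, D1 w = j) (hJm : J ≤ maximalIdeal Q)
    (h2 : ∀ w, D2 w ∈ maximalIdeal Q • (⊤ : Submodule Q M1))
    (h3 : ∀ w, D3 w ∈ maximalIdeal Q • (⊤ : Submodule Q M2)) :
    HasResolutionFormat J a b := by
  let E1 := (Module.finBasisOfFinrankEq Q M1 r1).equivFun
  let E2 := (Module.finBasisOfFinrankEq Q M2 r2).equivFun
  let E3 := (Module.finBasisOfFinrankEq Q M3 r3).equivFun
  refine ⟨D1 ∘ₗ E1.symm.toLinearMap, E1.toLinearMap ∘ₗ D2 ∘ₗ E2.symm.toLinearMap,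
    E2.toLinearMap ∘ₗ D3 ∘ₗ E3.symm.toLinearMap, ?_, ?_, ?_, ?_, hJm, ?_, ?_⟩
  · ext j
    rw [hJ]
    exact ⟨fun ⟨w, hw⟩ => ⟨_, hw⟩, fun ⟨w, hw⟩ => ⟨E1 w, by simpa using hw⟩⟩
  · ext z
    constructor
    · rintro ⟨w, rfl⟩
      simp [hR.c1]
    · intro hz
      obtain ⟨w, hw⟩ := hR.x1 (E1.symm z) hz
      exact ⟨E2 w, by simp [hw]⟩
  · ext z
    constructor
    · rintro ⟨w, rfl⟩
      simp [hR.c2]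
    · intro hz
      have hz' : E1 (D2 (E2.symm z)) = 0 := hz
      obtain ⟨w, hw⟩ := hR.x2 (E2.symm z) (by simpa using hz')
      exact ⟨E3 w, by simp [hw]⟩
  · rw [eq_bot_iff]
    intro z hz
    have hz' : E2 (D3 (E3.symm z)) = 0 := hz
    have := hR.inj (E3.symm z) (by simpa using hz')
    simpa using this
  · rintro _ ⟨w, rfl⟩
    exact map_mem_smul_top' _ E1.toLinearMap (h2 _)
  · rintro _ ⟨w, rfl⟩
    exact map_mem_smul_top' _ E2.toLinearMap (h3 _)

/-- functionals vanishing on two vectors -/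
def ann2 (Q : Type*) {F : Type*} [CommRing Q] [AddCommGroup F] [Module Q F] (e1 e2 : F) :
    Submodule Q (F →ₗ[Q] Q) where
  carrier := {φ | φ e1 = 0 ∧ φ e2 = 0}
  add_mem' := fun ha hb => ⟨by simp [ha.1, hb.1], by simp [ha.2, hb.2]⟩
  zero_mem' := ⟨rfl, rfl⟩
  smul_mem' := fun c a ha => ⟨by simp [ha.1], by simp [ha.2]⟩

theorem ann2_rank {Q : Type*} [CommRing Q] [IsLocalRing Q] {m : ℕ}
    (e1 e2 : Fin m → Q) (φ1 φ2 : (Fin m → Q) →ₗ[Q] Q) (h11 : φ1 e1 = 1) (h12 : φ1 e2 = 0)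
    (h21 : φ2 e1 = 0) (h22 : φ2 e2 = 1) :
    Module.Free Q (ann2 Q e1 e2) ∧ Module.Finite Q (ann2 Q e1 e2) ∧
      Module.finrank Q (ann2 Q e1 e2) = m - 2 := by
  let ev : (Fin m → Q) → (((Fin m → Q) →ₗ[Q] Q) →ₗ[Q] Q) := fun e => Module.Dual.eval Q _ e
  have hev : ∀ e φ, ev e φ = φ e := fun _ _ => rfl
  let p0 : ((Fin m → Q) →ₗ[Q] Q) →ₗ[Q] ((Fin m → Q) →ₗ[Q] Q) :=
    LinearMap.id - (ev e1).smulRight φ1 - (ev e2).smulRight φ2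
  have hp0 : ∀ φ, p0 φ = φ - φ e1 • φ1 - φ e2 • φ2 := fun φ => by simp [p0, hev]
  let p : ((Fin m → Q) →ₗ[Q] Q) →ₗ[Q] ann2 Q e1 e2 := p0.codRestrict _ (fun φ => by
    rw [hp0]; exact ⟨by simp [h11, h21], by simp [h12, h22]⟩)
  have hp : ∀ φ, (p φ : (Fin m → Q) →ₗ[Q] Q) = φ - φ e1 • φ1 - φ e2 • φ2 := hp0
  have hps : p ∘ₗ (ann2 Q e1 e2).subtype = LinearMap.id := by
    refine LinearMap.ext fun φ => Subtype.ext ?_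
    have := φ.2
    simp [hp, this.1, this.2]
  have hproj : Module.Projective Q (ann2 Q e1 e2) := Module.Projective.of_split _ _ hps
  have hfin : Module.Finite Q (ann2 Q e1 e2) := Module.Finite.of_surjective p (fun φ =>
    ⟨φ, LinearMap.congr_fun hps φ⟩)
  have hfree : Module.Free Q (ann2 Q e1 e2) :=
    Module.free_of_flat_of_isLocalRing (R := Q) (P := ann2 Q e1 e2)
  refine ⟨hfree, hfin, ?_⟩
  let F : ((Fin m → Q) →ₗ[Q] Q) →ₗ[Q] (ann2 Q e1 e2 × Q × Q) :=
    p.prod ((ev e1).prod (ev e2))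
  have hF : Function.Bijective F := by
    constructor
    · intro φ φ' h
      have h0 : (p φ, φ e1, φ e2) = (p φ', φ' e1, φ' e2) := h
      simp only [Prod.mk.injEq] at h0
      have k := hp φ
      have k' := hp φ'
      rw [h0.1, h0.2.1, h0.2.2, k'] at k
      exact (sub_left_injective (sub_left_injective k)).symm
    · rintro ⟨φ, a, b⟩
      have hφ := φ.2
      refine ⟨φ + a • φ1 + b • φ2, ?_⟩
      refine Prod.ext (Subtype.ext ?_) (Prod.ext ?_ ?_)
      · change (p _ : (Fin m → Q) →ₗ[Q] Q) = _
        rw [hp]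
        simp only [LinearMap.add_apply, LinearMap.smul_apply, h11, h12, h21, h22, hφ.1, hφ.2]
        simp
        abel
      · simp [F, hev, h11, h21, hφ.1]
      · simp [F, hev, h12, h22, hφ.2]
  have h := (LinearEquiv.ofBijective F hF).finrank_eq
  have hd : Module.finrank Q ((Fin m → Q) →ₗ[Q] Q) = m := by
    simp [Module.finrank_linearMap]
  rw [hd, Module.finrank_prod, Module.finrank_prod, Module.finrank_self] at h
  omega

theorem not_two_gen {Q : Type*} [CommRing Q] [IsLocalRing Q] {m : ℕ} (hm : 4 ≤ m)
    (e1 e2 : Fin m → Q)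
    (h : ∀ u, ∃ c1 c2 : Q, u - c1 • e1 - c2 • e2 ∈ maximalIdeal Q • (⊤ : Submodule Q (Fin m → Q))) :
    False := by
  let k := ResidueField Q
  let π : (Fin m → Q) → (Fin m → k) := fun f i => residue Q (f i)
  let L : (k × k) →ₗ[k] (Fin m → k) := (LinearMap.toSpanSingleton k _ (π e1)).coprod
    (LinearMap.toSpanSingleton k _ (π e2))
  have hL : Function.Surjective L := by
    intro w
    choose u hu using fun i => residue_surjective (w i)
    obtain ⟨c1, c2, hc⟩ := h u
    refine ⟨(residue Q c1, residue Q c2), funext fun i => ?_⟩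
    have := (mem_smul_top_pi _ _).1 hc i
    rw [← residue_eq_zero_iff] at this
    simp only [Pi.sub_apply, Pi.smul_apply, smul_eq_mul, map_sub, map_mul, hu] at this
    simp [L, π]
    linear_combination -this
  have := LinearMap.finrank_le_finrank_of_surjective hL
  simp at this
  omega

end Part5
section Part6

open IsLocalRing

theorem exists_frame {Q : Type*} [CommRing Q] [IsNoetherianRing Q] [IsLocalRing Q] {m n N : ℕ}
    (hm : 4 ≤ m)
    {d1 : (Fin m → Q) →ₗ[Q] Q} {d2 : (Fin N → Q) →ₗ[Q] (Fin m → Q)}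
    {d3 : (Fin n → Q) →ₗ[Q] (Fin N → Q)} (hF : Res d1 d2 d3)
    (hI : LinearMap.range d1 ≤ maximalIdeal Q)
    (hd3 : ∀ w, d3 w ∈ maximalIdeal Q • (⊤ : Submodule Q (Fin N → Q)))
    {x y z : Q} (hx : x ∈ LinearMap.range d1) (hy : y ∈ LinearMap.range d1)
    (hz : z ∈ LinearMap.range d1) (hr : Reg3 x y z) :
    ∃ (e1 e2 e3 : Fin m → Q) (φ1 φ2 : (Fin m → Q) →ₗ[Q] Q),
      Reg3 (d1 e1) (d1 e2) (d1 e3) ∧ e3 ∈ maximalIdeal Q • (⊤ : Submodule Q (Fin m → Q)) ∧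
      φ1 e1 = 1 ∧ φ1 e2 = 0 ∧ φ2 e1 = 0 ∧ φ2 e2 = 1 ∧
      beta d1 e1 e2 ∈ maximalIdeal Q • LinearMap.ker d1 := by
  obtain ⟨u, v, φ1, φ2, hu, hb⟩ := exists_pair hm hF hI hd3 hx hy hz hr
  obtain ⟨w1, hw1, w2, hw2, w3, hw3, hreg⟩ :=
    exists_reg3 (LinearMap.range d1) hI hx hy hz hr (d1 u) (d1 v) 0
  obtain ⟨a, ha, rfl⟩ := (mem_smul_range _ d1 w1).1 hw1
  obtain ⟨b, hb', rfl⟩ := (mem_smul_range _ d1 w2).1 hw2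
  obtain ⟨c, hc, rfl⟩ := (mem_smul_range _ d1 w3).1 hw3
  rw [← map_add, ← map_add, zero_add] at hreg
  have hD : IsUnit (φ1 (u + a) * φ2 (v + b) - φ1 (v + b) * φ2 (u + a)) := by
    rw [← residue_ne_zero_iff_isUnit] at hu ⊢
    have z : ∀ (φ : (Fin m → Q) →ₗ[Q] Q) (t), t ∈ maximalIdeal Q • (⊤ : Submodule Q (Fin m → Q)) →
        residue Q (φ t) = 0 := fun φ t ht =>
      (residue_eq_zero_iff _).2 (apply_mem_of_mem_smul_top _ φ ht)
    simpa [z _ _ ha, z _ _ hb'] using hu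
  have hbeta : beta d1 (u + a) (v + b) ∈ maximalIdeal Q • LinearMap.ker d1 := by
    have : beta d1 (u + a) (v + b) = beta d1 u v + beta d1 a (v + b) + beta d1 u b := by
      simp only [beta, map_add]; module
    rw [this]
    exact Submodule.add_mem _ (Submodule.add_mem _ hb (beta_mem _ d1 ha _)) (beta_mem' _ d1 hb' _)
  obtain ⟨t, ht⟩ := hD.exists_left_inv
  generalize u + a = e1 at *
  generalize v + b = e2 at *
  refine ⟨e1, e2, c, t • (φ2 e2 • φ1 - φ1 e2 • φ2), t • (φ1 e1 • φ2 - φ2 e1 • φ1), hreg, hc,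
    ?_, ?_, ?_, ?_, hbeta⟩
  · simp; linear_combination ht
  · simp; ring
  · simp; ring
  · simp; linear_combination ht

theorem main_aux {Q : Type*} [CommRing Q] [IsNoetherianRing Q] [IsLocalRing Q] {m n N : ℕ}
    (hm : 4 ≤ m) (hN : N = m + n - 1)
    {d1 : (Fin m → Q) →ₗ[Q] Q} {d2 : (Fin N → Q) →ₗ[Q] (Fin m → Q)}
    {d3 : (Fin n → Q) →ₗ[Q] (Fin N → Q)} (hF : Res d1 d2 d3)
    (hI : LinearMap.range d1 ≤ maximalIdeal Q)
    (hd2 : ∀ w, d2 w ∈ maximalIdeal Q • (⊤ : Submodule Q (Fin m → Q)))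
    (hd3 : ∀ w, d3 w ∈ maximalIdeal Q • (⊤ : Submodule Q (Fin N → Q)))
    {x y z : Q} (hx : x ∈ LinearMap.range d1) (hy : y ∈ LinearMap.range d1)
    (hz : z ∈ LinearMap.range d1) (hr : Reg3 x y z) :
    ∃ (e1 e2 e3 : Fin m → Q), Reg3 (d1 e1) (d1 e2) (d1 e3) ∧
      HasResolutionFormat (Submodule.colon (Ideal.span {d1 e1, d1 e2, d1 e3})
        (LinearMap.range d1 : Ideal Q)) (n + 3) (m - 2) := by
  obtain ⟨e1, e2, e3, φ1, φ2, hreg, he3, h11, h12, h21, h22, hb⟩ :=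
    exists_frame hm hF hI hd3 hx hy hz hr
  refine ⟨e1, e2, e3, hreg, ?_⟩
  obtain ⟨s1, s2, hs1, hs2, s11, s22, s21⟩ := exists_s hF e1 e2 φ1 φ2 h11 h12 h21 h22
  have hker : LinearMap.ker d1 = LinearMap.range d2 := by
    ext z; exact ⟨fun h => hF.x1 z h, fun ⟨w, hw⟩ => by rw [← hw]; exact hF.c1 w⟩
  have hf : ∀ f, d2 f ∈ maximalIdeal Q • LinearMap.ker d1 →
      f ∈ maximalIdeal Q • (⊤ : Submodule Q (Fin N → Q)) := by
    intro f hf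
    rw [hker, mem_smul_range] at hf
    obtain ⟨t, ht, htf⟩ := hf
    obtain ⟨w, hw⟩ := hF.x2 (f - t) (by rw [map_sub, htf, sub_self])
    have : f = d3 w + t := by rw [hw]; abel
    rw [this]
    exact Submodule.add_mem _ (hd3 w) ht
  have f12 := hf (s1 e2) (by rw [hs1]; exact hb)
  have f13 := hf (s1 e3) (by rw [hs1]; exact beta_mem' _ d1 he3 _)
  have f23 := hf (s2 e3) (by rw [hs2]; exact beta_mem' _ d1 he3 _)
  obtain ⟨h, hh⟩ := hF.x2 (d1 e1 • s2 e3 - d1 e2 • s1 e3 + d1 e3 • s1 e2) (by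
    simp only [map_add, map_sub, map_smul, hs1, hs2, beta]; module)
  have hx1 : d1 e1 ∈ maximalIdeal Q := hI ⟨_, rfl⟩
  have hx2 : d1 e2 ∈ maximalIdeal Q := hI ⟨_, rfl⟩
  obtain ⟨hfree, hfin, hrk⟩ := ann2_rank e1 e2 φ1 φ2 h11 h12 h21 h22
  obtain ⟨D3, hD3⟩ : ∃ D3 : ann2 Q e1 e2 →ₗ[Q] (((Fin N → Q) →ₗ[Q] Q) × Q),
      ∀ φ, D3 φ = (φ.1 ∘ₗ d2, φ.1 e3) :=
    ⟨{ toFun := fun φ => (φ.1 ∘ₗ d2, φ.1 e3)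
       map_add' := fun a b => rfl
       map_smul' := fun a b => rfl }, fun _ => rfl⟩
  obtain ⟨D2, hD2⟩ : ∃ D2 : (((Fin N → Q) →ₗ[Q] Q) × Q) →ₗ[Q]
      (((Fin n → Q) →ₗ[Q] Q) × Q × Q × Q), ∀ ψ c, D2 (ψ, c) = (ψ ∘ₗ d3, ψ (s1 e2),
        ψ (s1 e3) - d1 e1 * c, ψ (s2 e3) - d1 e2 * c) :=
    ⟨{ toFun := fun t => (t.1 ∘ₗ d3, t.1 (s1 e2),
        t.1 (s1 e3) - d1 e1 * t.2, t.1 (s2 e3) - d1 e2 * t.2)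
       map_add' := fun a b => by
        refine Prod.ext rfl (Prod.ext rfl (Prod.ext ?_ ?_)) <;> simp <;> ring
       map_smul' := fun a b => by
        refine Prod.ext rfl (Prod.ext rfl (Prod.ext ?_ ?_)) <;> simp <;> ring },
      fun _ _ => rfl⟩
  obtain ⟨D1, hD1⟩ : ∃ D1 : (((Fin n → Q) →ₗ[Q] Q) × Q × Q × Q) →ₗ[Q] Q,
      ∀ v p q r, D1 (v, p, q, r) = v h - (d1 e1 * r - d1 e2 * q + d1 e3 * p) :=
    ⟨{ toFun := fun t => t.1 h - (d1 e1 * t.2.2.2 - d1 e2 * t.2.2.1 + d1 e3 * t.2.1)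
       map_add' := fun a b => by simp; ring
       map_smul' := fun a b => by simp; ring }, fun _ _ _ _ => rfl⟩
  have hR : Res (Q := Q) (F1 := ((Fin n → Q) →ₗ[Q] Q) × Q × Q × Q)
      (F2 := ((Fin N → Q) →ₗ[Q] Q) × Q) (F3 := ann2 Q e1 e2) D1 D2 D3 := by
    refine ⟨?_, ?_, ?_, ?_, ?_⟩
    · rintro ⟨ψ, c⟩
      rw [hD2, hD1, LinearMap.comp_apply, hh]
      simp; ring
    · rintro ⟨v, p, q, r⟩ hv
      rw [hD1] at hv
      obtain ⟨ψ, c1, c2, c3, k0, k1, k2, k3⟩ := exG1 hF hreg hs1 hs2 s11 s22 s21 hh v p q r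
        (by linear_combination hv)
      refine ⟨(ψ - (c1 • φ1 + c2 • φ2) ∘ₗ d2, c3 - (c1 * φ1 e3 + c2 * φ2 e3)), ?_⟩
      rw [hD2]
      refine Prod.ext (LinearMap.ext fun w => ?_) (Prod.ext ?_ (Prod.ext ?_ ?_))
      · simp [hF.c2, k0]
      · simp [hs1, beta, k1, h11, h12, h21, h22]; ring
      · simp [hs1, beta, k2, h11, h12, h21, h22]; ring
      · simp [hs2, beta, k3, h11, h12, h21, h22]; ring
    · rintro ⟨φ, g1, g2⟩
      rw [hD3, hD2]
      refine Prod.ext (LinearMap.ext fun w => ?_) (Prod.ext ?_ (Prod.ext ?_ ?_))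
      · simp [hF.c2]
      · simp [hs1, beta, g1, g2]
      · simp [hs1, beta, g1, g2]
      · simp [hs2, beta, g1, g2]
    · rintro ⟨ψ, c⟩ hψ
      rw [hD2] at hψ
      simp only [Prod.mk_eq_zero] at hψ
      obtain ⟨k0, k1, k2, k3⟩ := hψ
      obtain ⟨φ, a0, a1, a2, a3⟩ := exG2 hF hreg hs1 hs2 s11 ψ 0 0 c
        (fun w => LinearMap.congr_fun k0 w) (by simp [k1]) (by linear_combination k2)
      refine ⟨⟨φ, a1, a2⟩, ?_⟩
      rw [hD3]
      exact Prod.ext (LinearMap.ext fun w => a0 w) a3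
    · rintro ⟨φ, g1, g2⟩ hφ
      rw [hD3] at hφ
      simp only [Prod.mk_eq_zero] at hφ
      exact Subtype.ext (exG3 hF hreg.h1 φ (fun w => LinearMap.congr_fun hφ.1 w) g1)
  refine format_of ?_ ?_ hrk hR _ ?_ ?_ ?_ ?_
  · simp [Module.finrank_prod, Module.finrank_linearMap]
  · simp [Module.finrank_prod, Module.finrank_linearMap]; omega
  · intro j
    rw [mem_colon_triple]
    constructor
    · intro hj
      obtain ⟨v, p, q, r, k⟩ := exG0 hF hreg (hs1 e2) (hs1 e3) (hs2 e3) hh j hj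
      exact ⟨(v, p, q, r), by rw [hD1, k]⟩
    · rintro ⟨⟨v, p, q, r⟩, rfl⟩ u
      rw [hD1]
      obtain ⟨c1, c2, c3, k⟩ := mem_colon_of_h hF (hs1 e2) (hs1 e3) (hs2 e3) hh v u
      exact ⟨c1 - r * d1 u, c2 + q * d1 u, c3 - p * d1 u, by linear_combination k⟩
  · intro j hj
    by_contra hju
    have hju : IsUnit j := by simpa using hju
    obtain ⟨t, ht⟩ := hju.exists_left_inv
    rw [mem_colon_triple] at hj
    refine not_two_gen hm e1 e2 fun u => ?_
    obtain ⟨c1, c2, c3, k⟩ := hj (t • u)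
    obtain ⟨w, hw⟩ := hF.x1 (u - c1 • e1 - c2 • e2 - c3 • e3) (by
      simp at k ⊢
      linear_combination k - d1 u * ht)
    refine ⟨c1, c2, ?_⟩
    have : u - c1 • e1 - c2 • e2 = d2 w + c3 • e3 := by rw [hw]; abel
    rw [this]
    exact Submodule.add_mem _ (hd2 w) (Submodule.smul_mem _ _ he3)
  · rintro ⟨ψ, c⟩
    rw [hD2]
    have ap := fun {f} => apply_mem_of_mem_smul_top (f := f) (maximalIdeal Q) ψ
    refine prod_mem_smul_top _ (dual_mem_smul_top _ _ fun w => ap (hd3 w))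
      (prod_mem_smul_top _ (self_mem_smul_top _ (ap f12)) (prod_mem_smul_top _
        (self_mem_smul_top _ ?_) (self_mem_smul_top _ ?_)))
    · exact Ideal.sub_mem _ (ap f13) (Ideal.mul_mem_right _ _ hx1)
    · exact Ideal.sub_mem _ (ap f23) (Ideal.mul_mem_right _ _ hx2)
  · rintro φ
    rw [hD3]
    have ap := fun {f} => apply_mem_of_mem_smul_top (f := f) (maximalIdeal Q) φ.1
    exact prod_mem_smul_top _ (dual_mem_smul_top _ _ fun w => ap (hd2 w))
      (self_mem_smul_top _ (ap he3))

end Part6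

/-- **Proposition 1.2(a).** Let `Q` be a commutative Noetherian local ring and `I ⊆ Q` a
grade `3` perfect ideal of resolution format `(1, m, m+n-1, n)`.  If `m ≥ 4`, then there
exists a grade `3` perfect ideal of resolution format `(1, n+3, m+n, m-2)` that is
directly linked to `I`. -/
theorem stmt_2 (Q : Type*) [CommRing Q] [IsNoetherianRing Q] [IsLocalRing Q]
    (I : Ideal Q) (m n : ℕ) (hI : IsGrade3PerfectOfFormat I m n) (hm : 4 ≤ m) :
    ∃ J : Ideal Q, IsGrade3PerfectOfFormat J (n + 3) (m - 2) ∧ DirectlyLinked I J := by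
  obtain ⟨⟨x, y, z, hx, hy, hz, hr⟩, -, hn, d1, d2, d3, rfl, h1, h2, h3, hI, hd2, hd3⟩ := hI
  have hF : Res d1 d2 d3 := by
    refine ⟨fun w => ?_, fun z hz => ?_, fun w => ?_, fun z hz => ?_, fun w hw => ?_⟩
    · have : d2 w ∈ LinearMap.ker d1 := h1 ▸ ⟨w, rfl⟩
      exact this
    · have : z ∈ LinearMap.range d2 := h1 ▸ hz
      exact this
    · have : d3 w ∈ LinearMap.ker d2 := h2 ▸ ⟨w, rfl⟩
      exact this
    · have : z ∈ LinearMap.range d3 := h2 ▸ hz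
      exact this
    · have : w ∈ LinearMap.ker d3 := hw
      rw [h3] at this
      exact this
  obtain ⟨e1, e2, e3, hreg, hres⟩ := main_aux hm rfl hF hI (fun w => hd2 ⟨w, rfl⟩)
    (fun w => hd3 ⟨w, rfl⟩) hx hy hz ((weaklyRegular_iff_reg3 x y z).1 hr.toIsWeaklyRegular)
  have hreg' : RingTheory.Sequence.IsRegular Q [d1 e1, d1 e2, d1 e3] := by
    refine (IsLocalRing.isRegular_iff_isWeaklyRegular_of_subset_maximalIdeal ?_).2
      ((weaklyRegular_iff_reg3 _ _ _).2 hreg)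
    intro r hr
    simp only [List.mem_cons, List.not_mem_nil, or_false] at hr
    rcases hr with rfl | rfl | rfl <;> exact hI ⟨_, rfl⟩
  refine ⟨_, ⟨⟨d1 e1, d1 e2, d1 e3, ?_, ?_, ?_, hreg'⟩, by omega, by omega, hres⟩,
    d1 e1, d1 e2, d1 e3, ⟨_, rfl⟩, ⟨_, rfl⟩, ⟨_, rfl⟩, hreg', rfl⟩
  · exact (mem_colon_triple d1 _ _ _ _).2 fun u => ⟨d1 u, 0, 0, by ring⟩
  · exact (mem_colon_triple d1 _ _ _ _).2 fun u => ⟨0, d1 u, 0, by ring⟩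
  · exact (mem_colon_triple d1 _ _ _ _).2 fun u => ⟨0, 0, d1 u, by ring⟩
end

section
/- Let (Q, 𝔫, k) be a commutative Noetherian local ring and I ⊆ Q a grade 3 perfect ideal of resolution format (1, m, m+n−1, n). If m ≥ 5, then there exists a grade 3 perfect ideal J of resolution format (1, n+3, m+n−1, m−3) that is directly linked to I. -/
theorem av_coset {Q : Type*} [CommRing Q] (L : Ideal Q) (x : Q) :
    ∀ (k : ℕ) (s : Finset (Ideal Q)), s.card ≤ k → (∀ P ∈ s, P.IsPrime) → (∀ P ∈ s, ¬ L ≤ P) →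
      ∃ l ∈ L, ∀ P ∈ s, x + l ∉ P := by
  classical
  intro k
  induction k with
  | zero =>
    intro s hs _ _
    have : s = ∅ := by simpa using hs
    subst this
    exact ⟨0, L.zero_mem, by simp⟩
  | succ k ih =>
    intro s hs hp hL
    by_cases hch : ∃ P ∈ s, ∃ P' ∈ s, P < P'
    · obtain ⟨P, hP, P', hP', hlt⟩ := hch
      obtain ⟨l, hl, h⟩ := ih (s.erase P) (by rw [Finset.card_erase_of_mem hP]; omega)
        (fun R hR => hp R (Finset.mem_of_mem_erase hR))
        (fun R hR => hL R (Finset.mem_of_mem_erase hR))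
      refine ⟨l, hl, fun R hR => ?_⟩
      by_cases hRP : R = P
      · subst hRP
        intro hx
        exact h P' (Finset.mem_erase.2 ⟨hlt.ne', hP'⟩) (hlt.le hx)
      · exact h R (Finset.mem_erase.2 ⟨hRP, hR⟩)
    · push Not at hch
      set T : Ideal Q := L * ∏ P ∈ s.filter (fun P => x ∉ P), P with hT
      have hTL : T ≤ L := Ideal.mul_le_inf.trans inf_le_left
      have hTP : ∀ P ∈ s, x ∉ P → T ≤ P := fun P hP hx =>
        (Ideal.mul_le_inf.trans inf_le_right).trans (Ideal.prod_le_inf.trans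
          (Finset.inf_le (f := id) (by simp [hP, hx])))
      have hno : ∀ P ∈ s, x ∈ P → ¬ T ≤ P := by
        intro P hP hx hle
        have := hp P hP
        rcases (this.mul_le).1 hle with h | h
        · exact hL P hP h
        · obtain ⟨R, hR, hRP⟩ := (this.prod_le).1 h
          simp only [Finset.mem_filter] at hR
          rcases hRP.lt_or_eq with h1 | h1
          · exact hch R hR.1 P hP h1
          · subst h1; exact hR.2 hx
      have : ∃ l ∈ T, ∀ P ∈ s.filter (fun P => x ∈ P), l ∉ P := by
        by_contra hcon
        push Not at hcon
        have hsub : (T : Set Q) ⊆ ⋃ P ∈ (↑(s.filter (fun P => x ∈ P)) : Set (Ideal Q)), (id P : Ideal Q) := by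
          intro l hl
          obtain ⟨P, hP, h⟩ := hcon l hl
          simp only [Set.mem_iUnion]
          exact ⟨P, hP, h⟩
        obtain ⟨P, hP, h⟩ := (Ideal.subset_union_prime (f := id) ⊥ ⊥ (fun P hP _ _ =>
          hp P (Finset.mem_filter.1 hP).1)).1 hsub
        simp only [Finset.mem_filter] at hP
        exact hno P hP.1 hP.2 h
      obtain ⟨l, hl, h⟩ := this
      refine ⟨l, hTL hl, fun P hP hx => ?_⟩
      by_cases hxP : x ∈ P
      · exact h P (by simp [hP, hxP]) ((P.add_mem_iff_right hxP).1 hx)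
      · exact hxP ((P.add_mem_iff_left (hTP P hP hxP hl)).1 hx)

theorem coset_regular {Q : Type*} [CommRing Q] [IsNoetherianRing Q] (A L : Ideal Q)
    (hL : ∀ w, (∀ l ∈ L, l * w ∈ A) → w ∈ A) (x : Q) :
    ∃ l ∈ L, ∀ w, (x + l) * w ∈ A → w ∈ A := by
  have hfin := associatedPrimes.finite Q (Q ⧸ A)
  obtain ⟨l, hl, h⟩ := av_coset L x _ hfin.toFinset le_rfl
    (fun P hP => (hfin.mem_toFinset.1 hP).isPrime) (by
      intro P hP hle
      obtain ⟨hprime, w, hw⟩ := isAssociatedPrime_iff.1 (hfin.mem_toFinset.1 hP)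
      obtain ⟨w, rfl⟩ := Ideal.Quotient.mk_surjective w
      have key : ∀ r, r ∈ P ↔ r * w ∈ A := by
        intro r
        rw [hw, Submodule.mem_colon_singleton, Submodule.mem_bot, Algebra.smul_def]
        exact Ideal.Quotient.eq_zero_iff_mem
      apply hprime.ne_top
      rw [Ideal.eq_top_iff_one, key, one_mul]
      exact hL w (fun l hl => (key l).1 (hle hl)))
  refine ⟨l, hl, ?_⟩
  have hreg : IsSMulRegular (Q ⧸ A) (x + l) := by
    by_contra hcon
    have h2 : x + l ∈ {r | IsSMulRegular (Q ⧸ A) r}ᶜ := hcon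
    rw [← biUnion_associatedPrimes_eq_compl_regular] at h2
    simp only [Set.mem_iUnion] at h2
    obtain ⟨P, hP, h3⟩ := h2
    exact h P (hfin.mem_toFinset.2 hP) h3
  intro w hw
  have : (x + l) • (Ideal.Quotient.mk A w) = 0 := by
    rw [Algebra.smul_def]
    exact Ideal.Quotient.eq_zero_iff_mem.2 hw
  exact Ideal.Quotient.eq_zero_iff_mem.1 (hreg.right_eq_zero_of_smul this)

structure Good {Q : Type*} [CommRing Q] (x y z : Q) (M : Type*) [AddCommGroup M] [Module Q M] :
    Prop where
  r1 : ∀ m : M, x • m = 0 → m = 0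
  r2 : ∀ m m' : M, y • m = x • m' → ∃ u, m = x • u
  r3 : ∀ m p q : M, z • m = x • p + y • q → ∃ s t, m = x • s + y • t

theorem Good.pi {Q : Type*} [CommRing Q] {x y z : Q} (h : Good x y z Q) (ι : Type*) :
    Good x y z (ι → Q) where
  r1 m hm := funext fun i => h.r1 _ (congrFun hm i)
  r2 m m' hm := by
    choose u hu using fun i => h.r2 _ _ (congrFun hm i)
    exact ⟨u, funext hu⟩
  r3 m p q hm := by
    choose s t hst using fun i => h.r3 _ _ _ (congrFun hm i)
    exact ⟨s, t, funext hst⟩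

theorem Good.equiv {Q : Type*} [CommRing Q] {x y z : Q} {M N : Type*} [AddCommGroup M] [Module Q M]
    [AddCommGroup N] [Module Q N] (h : Good x y z M) (e : M ≃ₗ[Q] N) :
    Good x y z N where
  r1 m hm := by
    have := h.r1 (e.symm m) (by rw [← map_smul, hm, map_zero])
    simpa using this
  r2 m m' hm := by
    obtain ⟨u, hu⟩ := h.r2 (e.symm m) (e.symm m') (by rw [← map_smul, hm, map_smul])
    exact ⟨e u, by rw [← map_smul, ← hu]; simp⟩
  r3 m p q hm := by
    obtain ⟨s, t, hu⟩ := h.r3 (e.symm m) (e.symm p) (e.symm q)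
      (by rw [← map_smul, hm, map_add, map_smul, map_smul])
    exact ⟨e s, e t, by rw [← map_smul, ← map_smul, ← map_add, ← hu]; simp⟩

theorem Good.dual {Q : Type*} [CommRing Q] {x y z : Q} (h : Good x y z Q) (k : ℕ) :
    Good x y z ((Fin k → Q) →ₗ[Q] Q) :=
  (h.pi (Fin k)).equiv ((Pi.basisFun Q (Fin k)).constr Q)

theorem good_iff {Q : Type*} [CommRing Q] {x y z : Q} :
    RingTheory.Sequence.IsWeaklyRegular Q [x, y, z] ↔ Good x y z Q := by
  have hfin : RingTheory.Sequence.IsWeaklyRegular Q [x, y, z] ↔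
     (∀ w : Q, x * w ∈ (⊥ : Ideal Q) → w ∈ (⊥ : Ideal Q)) ∧
     (∀ w : Q, y * w ∈ Ideal.span {x} → w ∈ Ideal.span {x}) ∧
     (∀ w : Q, z * w ∈ Ideal.span {x, y} → w ∈ Ideal.span {x, y}) := by
    rw [RingTheory.Sequence.isWeaklyRegular_iff_Fin]
    simp only [isSMulRegular_quotient_iff_mem_of_smul_mem]
    have e : Ideal.ofList [x, y] = Ideal.span {x, y} := by
      simp [Ideal.ofList]
      congr 1
    constructor
    · intro h
      refine ⟨?_, ?_, ?_⟩
      · simpa using h 0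
      · simpa using h 1
      · have := h 2
        simpa [Ideal.span_insert] using this
    · rintro ⟨h1, h2, h3⟩ i
      fin_cases i
      · simpa using h1
      · simpa using h2
      · simpa [Ideal.span_insert] using h3
  rw [hfin]
  simp only [Ideal.mem_span_singleton', Ideal.mem_span_pair, Ideal.mem_bot]
  constructor
  · rintro ⟨h1, h2, h3⟩
    refine ⟨fun m hm => h1 m hm, fun m m' hm => ?_, fun m p q hm => ?_⟩
    · obtain ⟨u, hu⟩ := h2 m ⟨m', by simpa [mul_comm] using hm.symm⟩
      exact ⟨u, by simp [← hu, mul_comm]⟩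
    · obtain ⟨s, t, hu⟩ := h3 m ⟨p, q, by simpa [mul_comm] using hm.symm⟩
      exact ⟨s, t, by simp [← hu, mul_comm]⟩
  · rintro ⟨h1, h2, h3⟩
    refine ⟨fun m hm => h1 m hm, ?_, ?_⟩
    · rintro w ⟨u, hu⟩
      obtain ⟨v, hv⟩ := h2 w u (by simp [← hu, mul_comm])
      exact ⟨v, by simp [hv, mul_comm]⟩
    · rintro w ⟨p, q, hu⟩
      obtain ⟨s, t, hv⟩ := h3 w p q (by simp [← hu, mul_comm])
      exact ⟨s, t, by simp [hv, mul_comm]⟩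

theorem good_lift {Q : Type*} [CommRing Q] [IsNoetherianRing Q] (I N : Ideal Q) (hIN : I ≤ N)
    {x0 y0 z0 : Q} (hx0 : x0 ∈ I) (hy0 : y0 ∈ I) (hz0 : z0 ∈ I) (h0 : Good x0 y0 z0 Q)
    (a b c : Q) : ∃ a' ∈ N * I, ∃ b' ∈ N * I, ∃ c' ∈ N * I,
      Good (a + a') (b + b') (c + c') Q := by
  have hNI : ∀ A : Ideal Q, (∀ w, (∀ l ∈ I, l * w ∈ A) → w ∈ A) →
      (∀ w, (∀ l ∈ N * I, l * w ∈ A) → w ∈ A) := by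
    intro A hA w hw
    refine hA w fun i hi => hA _ fun j hj => ?_
    rw [← mul_assoc]
    exact hw _ (Ideal.mul_mem_mul (hIN hj) hi)
  obtain ⟨a', ha', hA⟩ := coset_regular ⊥ (N * I) (hNI ⊥ (by
    intro w hw
    exact h0.r1 w (by simpa using hw x0 hx0))) a
  set x := a + a' with hx
  have r1 : ∀ m, x * m = 0 → m = 0 := fun m hm => by simpa using hA m (by simpa using hm)
  obtain ⟨b', hb', hB⟩ := coset_regular (Ideal.span {x}) (N * I) (hNI _ (by
    intro w hw
    obtain ⟨s, hs⟩ := Ideal.mem_span_singleton'.1 (hw x0 hx0)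
    obtain ⟨t, ht⟩ := Ideal.mem_span_singleton'.1 (hw y0 hy0)
    have e1 : y0 * s - x0 * t = 0 := r1 _ (by linear_combination y0 * hs - x0 * ht)
    obtain ⟨u, hu⟩ := h0.r2 s t (by simp only [smul_eq_mul]; linear_combination e1)
    simp only [smul_eq_mul] at hu
    have e2 : w - x * u = 0 := h0.r1 _ (by
      simp only [smul_eq_mul]; linear_combination - hs + x * hu)
    exact Ideal.mem_span_singleton'.2 ⟨u, by linear_combination - e2⟩)) b
  set y := b + b' with hy
  have r2 : ∀ m m', y * m = x * m' → ∃ u, m = x * u := fun m m' hm => by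
    obtain ⟨u, hu⟩ := Ideal.mem_span_singleton'.1
      (hB m (Ideal.mem_span_singleton'.2 ⟨m', by linear_combination - hm⟩))
    exact ⟨u, by linear_combination - hu⟩
  obtain ⟨c', hc', hC⟩ := coset_regular (Ideal.span {x, y}) (N * I) (hNI _ (by
    intro w hw
    obtain ⟨s1, t1, h1⟩ := Ideal.mem_span_pair.1 (hw x0 hx0)
    obtain ⟨s2, t2, h2⟩ := Ideal.mem_span_pair.1 (hw y0 hy0)
    obtain ⟨s3, t3, h3⟩ := Ideal.mem_span_pair.1 (hw z0 hz0)
    obtain ⟨e12, h12⟩ := r2 (y0 * t1 - x0 * t2) (-(y0 * s1 - x0 * s2))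
      (by linear_combination y0 * h1 - x0 * h2)
    obtain ⟨e13, h13⟩ := r2 (z0 * t1 - x0 * t3) (-(z0 * s1 - x0 * s3))
      (by linear_combination z0 * h1 - x0 * h3)
    obtain ⟨e23, h23⟩ := r2 (z0 * t2 - y0 * t3) (-(z0 * s2 - y0 * s3))
      (by linear_combination z0 * h2 - y0 * h3)
    have e0 : z0 * e12 - y0 * e13 + x0 * e23 = 0 := r1 _ (by
      linear_combination -z0 * h12 + y0 * h13 - x0 * h23)
    obtain ⟨α, β, hab⟩ := h0.r3 e12 (-e23) e13 (by
      simp only [smul_eq_mul]; linear_combination e0)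
    simp only [smul_eq_mul] at hab
    have h12' : (y0 * s1 - x0 * s2) + y * e12 = 0 := r1 _ (by
      linear_combination y0 * h1 - x0 * h2 - y * h12)
    obtain ⟨t', ht'⟩ := h0.r2 (t1 - x * β) (t2 + x * α) (by
      simp only [smul_eq_mul]; linear_combination h12 + x * hab)
    obtain ⟨s', hs'⟩ := h0.r2 (s1 + y * β) (s2 - y * α) (by
      simp only [smul_eq_mul]; linear_combination h12' - y * hab)
    simp only [smul_eq_mul] at ht' hs'
    have e2 : w - (x * s' + y * t') = 0 := h0.r1 _ (by
      simp only [smul_eq_mul]; linear_combination - h1 + x * hs' + y * ht')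
    exact Ideal.mem_span_pair.2 ⟨s', t', by linear_combination - e2⟩)) c
  refine ⟨a', ha', b', hb', c', hc', fun m hm => r1 m hm, fun m m' hm => r2 m m' hm, ?_⟩
  intro m p q hm
  simp only [smul_eq_mul] at hm
  obtain ⟨s, t, hu⟩ := Ideal.mem_span_pair.1
      (hC m (Ideal.mem_span_pair.2 ⟨p, q, by linear_combination - hm⟩))
  exact ⟨s, t, by simp only [smul_eq_mul]; linear_combination - hu⟩

theorem alt_sum_zero {Q : Type*} [CommRing Q] {n : ℕ} (f : Fin n → Fin n → Q)
    (h1 : ∀ i j, f i j + f j i = 0) (h2 : ∀ i, f i i = 0) : ∑ j, ∑ i, f i j = 0 := by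
  rw [← Finset.sum_product']
  refine Finset.sum_involution (fun p _ => (p.2, p.1)) ?_ ?_ ?_ ?_
  · rintro ⟨i, j⟩ _; exact h1 _ _
  · rintro ⟨i, j⟩ _ hne heq
    simp only [Prod.mk.injEq] at heq
    apply hne
    simp only [← heq.1, h2]
  · simp
  · simp

theorem pf_lemma {Q : Type*} [CommRing Q] (N : Ideal Q) {F1 F2 : Type*} [AddCommGroup F1]
    [Module Q F1] [AddCommGroup F2] [Module Q F2] {n : ℕ} (d1 : F1 →ₗ[Q] Q) (d2 : F2 →ₗ[Q] F1)
    (d3 : (Fin n → Q) →ₗ[Q] F2) (h23 : LinearMap.range d3 = LinearMap.ker d2)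
    (h3 : LinearMap.ker d3 = ⊥) (a b c d : F1) (hg : Good (d1 a) (d1 b) (d1 c) Q)
    (ab ac ad bc bd cd : F2)
    (hab : d2 ab = d1 a • b - d1 b • a) (hac : d2 ac = d1 a • c - d1 c • a)
    (had : d2 ad = d1 a • d - d1 d • a) (hbc : d2 bc = d1 b • c - d1 c • b)
    (hbd : d2 bd = d1 b • d - d1 d • b) (hcd : d2 cd = d1 c • d - d1 d • c)
    (ξ : F2 →ₗ[Q] Q) (hξ : ∀ g, ξ (d3 g) ∈ N) :
    ξ ab * ξ cd - ξ ac * ξ bd + ξ ad * ξ bc ∈ N := by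
  have lift : ∀ f, d2 f = 0 → ∃ g, d3 g = f := fun f hf => by
    have : f ∈ LinearMap.range d3 := by rw [h23]; exact hf
    exact this
  have inj : Function.Injective d3 := LinearMap.ker_eq_bot.1 h3
  obtain ⟨abc, habc⟩ := lift (d1 a • bc - d1 b • ac + d1 c • ab) (by
    simp only [map_add, map_sub, map_smul, hab, hac, hbc]; module)
  obtain ⟨abd, habd⟩ := lift (d1 a • bd - d1 b • ad + d1 d • ab) (by
    simp only [map_add, map_sub, map_smul, hab, had, hbd]; module)
  obtain ⟨acd, hacd⟩ := lift (d1 a • cd - d1 c • ad + d1 d • ac) (by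
    simp only [map_add, map_sub, map_smul, hcd, hac, had]; module)
  obtain ⟨bcd, hbcd⟩ := lift (d1 b • cd - d1 c • bd + d1 d • bc) (by
    simp only [map_add, map_sub, map_smul, hcd, hbd, hbc]; module)
  have rel : d1 a • bcd - d1 b • acd + d1 c • abd - d1 d • abc = 0 := by
    apply inj
    simp only [map_add, map_sub, map_smul, habc, habd, hacd, hbcd, map_zero]; module
  set xa := d1 a
  set xb := d1 b
  set xc := d1 c
  set xd := d1 d
  set θ : (Fin n → Q) →ₗ[Q] Q := ξ ∘ₗ d3 with hθ
  have θabc : θ abc = xa * ξ bc - xb * ξ ac + xc * ξ ab := by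
    simp [hθ, habc]
  have θabd : θ abd = xa * ξ bd - xb * ξ ad + xd * ξ ab := by
    simp [hθ, habd]
  have θacd : θ acd = xa * ξ cd - xc * ξ ad + xd * ξ ac := by
    simp [hθ, hacd]
  have θapp : ∀ u : Fin n → Q, θ u = ∑ i, u i * θ (Pi.single i 1) := fun u => by
    conv_lhs => rw [pi_eq_sum_univ' u]
    simp [map_sum]
  have relc : ∀ j, xa * bcd j - xb * acd j + xc * abd j - xd * abc j = 0 := fun j => by
    simpa using congrFun rel j
  choose s t hst using fun i j => hg.r3 (abc i * abd j - abc j * abd i)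
    (-(abc i * bcd j - abc j * bcd i)) (abc i * acd j - abc j * acd i) (by
      simp only [smul_eq_mul]
      linear_combination abc i * relc j - abc j * relc i)
  simp only [smul_eq_mul] at hst
  set S : Fin n → Fin n → Q := fun i j => if i < j then s i j else if j < i then - s j i else 0
    with hS
  set T : Fin n → Fin n → Q := fun i j => if i < j then t i j else if j < i then - t j i else 0
    with hT
  have hST : ∀ i j, abc i * abd j - abc j * abd i = xa * S i j + xb * T i j := by
    intro i j
    rcases lt_trichotomy i j with h | h | h
    · simp [hS, hT, h, hst]
    · subst h; simp [hS, hT]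
    · simp only [hS, hT, h, not_lt_of_gt h, if_true, if_false]
      linear_combination - hst j i
  have hT1 : ∀ i j, T i j + T j i = 0 := by
    intro i j
    rcases lt_trichotomy i j with h | h | h
    · simp [hT, h, not_lt_of_gt h]
    · subst h; simp [hT]
    · simp [hT, h, not_lt_of_gt h]
  have hT2 : ∀ i, T i i = 0 := fun i => by simp [hT]
  set τ : Fin n → Q := fun i => θ (Pi.single i 1) with hτ
  set p : Fin n → Q := ξ ab • acd - ξ ac • abd + ξ ad • abc with hp
  set q : Fin n → Q := ξ ab • bcd - ξ bc • abd + ξ bd • abc with hq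
  have hθp : θ p = xa * (ξ ab * ξ cd - ξ ac * ξ bd + ξ ad * ξ bc) := by
    simp only [hp, map_add, map_sub, map_smul, θabc, θabd, θacd, smul_eq_mul]; ring
  set ιS : Fin n → Q := fun j => ∑ i, τ i * S i j with hιS
  set ιT : Fin n → Q := fun j => ∑ i, τ i * T i j with hιT
  have key : ∀ j, xb * (p j - ιT j) = xa * (q j + ιS j) := by
    intro j
    have e1 : θ abc * abd j - θ abd * abc j = xa * ιS j + xb * ιT j := by
      rw [θapp abc, θapp abd]
      simp only [hιS, hιT, Finset.mul_sum, Finset.sum_mul, ← Finset.sum_sub_distrib,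
        ← Finset.sum_add_distrib]
      refine Finset.sum_congr rfl fun i _ => ?_
      linear_combination τ i * hST i j
    simp only [hp, hq, Pi.add_apply, Pi.sub_apply, Pi.smul_apply, smul_eq_mul]
    rw [θabc, θabd] at e1
    linear_combination e1 - ξ ab * relc j
  obtain ⟨p', hp'⟩ := (hg.pi (Fin n)).r2 (p - ιT) (q + ιS) (funext key)
  have hθT : θ ιT = 0 := by
    rw [θapp]
    simp only [hιT, Finset.sum_mul]
    apply alt_sum_zero (fun i j => τ i * T i j * τ j)
    · intro i j
      linear_combination τ i * τ j * hT1 i j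
    · intro i; simp [hT2]
  have : (ξ ab * ξ cd - ξ ac * ξ bd + ξ ad * ξ bc) - θ p' = 0 := by
    apply hg.r1
    have h := congrArg θ hp'
    rw [map_sub, hθT, map_smul, hθp] at h
    simp only [smul_eq_mul] at h ⊢
    linear_combination h
  rw [sub_eq_zero.1 this]
  exact hξ p'


open IsLocalRing in
theorem dual_mem {Q : Type*} [CommRing Q] (N : Ideal Q) {F : Type*} [AddCommGroup F] [Module Q F]
    (f : F →ₗ[Q] Q) {δ : F} (h : δ ∈ N • (⊤ : Submodule Q F)) : f δ ∈ N := by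
  have h1 : f δ ∈ Submodule.map f (N • (⊤ : Submodule Q F)) := ⟨δ, h, rfl⟩
  rw [Submodule.map_smul''] at h1
  have h2 : N • Submodule.map f ⊤ ≤ N := by
    rw [smul_eq_mul]; exact Ideal.mul_le_inf.trans inf_le_left
  exact h2 h1

open IsLocalRing in
theorem isotropic_triple {Q : Type*} [CommRing Q] [IsLocalRing Q] {m : ℕ} (hm : 5 ≤ m)
    {F2 : Type*} [AddCommGroup F2] [Module Q F2]
    (φ : (Fin m → Q) →ₗ[Q] (Fin m → Q) →ₗ[Q] F2)
    (halt : ∀ (ξ : F2 →ₗ[Q] Q) a, ξ (φ a a) ∈ maximalIdeal Q)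
    (hpf : ∀ (ξ : F2 →ₗ[Q] Q) a b c d,
      ξ (φ a b) * ξ (φ c d) - ξ (φ a c) * ξ (φ b d) + ξ (φ a d) * ξ (φ b c) ∈ maximalIdeal Q) :
    ∃ (l : Fin 3 → Fin m) (g : Fin 3 → Fin m → Q), (∀ r s, g r (l s) = if r = s then 1 else 0) ∧
      ∀ r s (ξ : F2 →ₗ[Q] Q), ξ (φ (g r) (g s)) ∈ maximalIdeal Q := by
  classical
  have hanti : ∀ (ξ : F2 →ₗ[Q] Q) a b, ξ (φ a b) + ξ (φ b a) ∈ maximalIdeal Q := by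
    intro ξ a b
    have h := halt ξ (a + b)
    have h2 := Ideal.sub_mem _ (Ideal.sub_mem _ h (halt ξ a)) (halt ξ b)
    have e : ξ (φ (a + b) (a + b)) - ξ (φ a a) - ξ (φ b b) = ξ (φ a b) + ξ (φ b a) := by
      simp only [map_add, LinearMap.add_apply]; ring
    rwa [e] at h2
  let e : Fin m → Fin m → Q := fun i => Pi.single i 1
  by_cases hall : ∀ (ξ : F2 →ₗ[Q] Q) i j, ξ (φ (e i) (e j)) ∈ maximalIdeal Q
  · refine ⟨fun s => ⟨s, by omega⟩, fun r => e ⟨r, by omega⟩, ?_, fun r s ξ => hall _ _ _⟩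
    intro r s
    simp only [e, Pi.single_apply, Fin.mk.injEq, Fin.val_inj]
    simp only [eq_comm]
  · push Not at hall
    obtain ⟨ξ, i, j, hij⟩ := hall
    have hne : i ≠ j := by
      rintro rfl; exact hij (halt ξ _)
    have hu : IsUnit (ξ (φ (e i) (e j))) := by
      by_contra hcon; exact hij ((mem_maximalIdeal _).2 hcon)
    obtain ⟨v, hv⟩ := hu.exists_right_inv
    have hcard : 2 < ({i, j}ᶜ : Finset (Fin m)).card := by
      rw [Finset.card_compl, Finset.card_pair hne, Fintype.card_fin]; omega
    obtain ⟨l1, l2, l3, h1, h2, h3, h12, h13, h23⟩ := Finset.two_lt_card_iff.1 hcard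
    simp only [Finset.mem_compl, Finset.mem_insert, Finset.mem_singleton, not_or] at h1 h2 h3
    let l : Fin 3 → Fin m := ![l1, l2, l3]
    have hl : ∀ s, l s ≠ i ∧ l s ≠ j := by
      intro s; fin_cases s
      · exact h1
      · exact h2
      · exact h3
    have linj : ∀ r s, l r = l s ↔ r = s := by
      intro r s
      fin_cases r <;> fin_cases s <;> simp [l, h12, h13, h23, h12.symm, h13.symm, h23.symm]
    let g : Fin 3 → Fin m → Q := fun r => e (l r) - (v * ξ (φ (e (l r)) (e j))) • e i
      - (v * ξ (φ (e i) (e (l r)))) • e j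
    have hg1 : ∀ r, residue Q (ξ (φ (g r) (e j))) = 0 := by
      intro r
      have a1 := (residue_eq_zero_iff _).2 (halt ξ (e j))
      have a2 := congrArg (residue Q) hv
      simp only [g, map_sub, map_smul, LinearMap.sub_apply, LinearMap.smul_apply, smul_eq_mul,
        map_mul, map_one] at a1 a2 ⊢
      rw [a1]
      linear_combination - residue Q (ξ (φ (e (l r)) (e j))) * a2
    have hg2 : ∀ r, residue Q (ξ (φ (e i) (g r))) = 0 := by
      intro r
      have a1 := (residue_eq_zero_iff _).2 (halt ξ (e i))
      have a2 := congrArg (residue Q) hv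
      simp only [g, map_sub, map_smul, LinearMap.sub_apply, LinearMap.smul_apply, smul_eq_mul,
        map_mul, map_one] at a1 a2 ⊢
      rw [a1]
      linear_combination - residue Q (ξ (φ (e i) (e (l r)))) * a2
    have hg3 : ∀ r, residue Q (ξ (φ (e j) (g r))) = 0 := by
      intro r
      have a1 := (residue_eq_zero_iff _).2 (hanti ξ (e j) (g r))
      rw [map_add, hg1, add_zero] at a1
      exact a1
    have hω : residue Q (ξ (φ (e i) (e j))) ≠ 0 := fun h => hij ((residue_eq_zero_iff _).1 h)
    refine ⟨l, g, ?_, ?_⟩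
    · intro r s
      simp only [g, e, Pi.sub_apply, Pi.smul_apply, Pi.single_apply, smul_eq_mul, (hl s).1,
        (hl s).2, if_false, mul_zero, sub_zero, linj]
      simp only [eq_comm]
    · intro r s η
      rw [← residue_eq_zero_iff]
      have p1 := (residue_eq_zero_iff _).2 (hpf ξ (e i) (e j) (g r) (g s))
      have p2 := (residue_eq_zero_iff _).2 (hpf η (e i) (e j) (g r) (g s))
      have p3 := (residue_eq_zero_iff _).2 (hpf (ξ + η) (e i) (e j) (g r) (g s))
      simp only [LinearMap.add_apply, map_add, map_sub, map_mul, hg2, hg3, zero_mul, mul_zero,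
        sub_zero, add_zero, zero_add] at p1 p2 p3
      have p1' := (mul_eq_zero.1 p1).resolve_left hω
      rw [p1'] at p3
      refine (mul_eq_zero.1 ?_).resolve_left hω
      linear_combination p3 - p2

open IsLocalRing in
theorem choose_triple {Q : Type*} [CommRing Q] [IsNoetherianRing Q] [IsLocalRing Q]
    {m n : ℕ} (hm : 5 ≤ m) {F2 : Type*} [AddCommGroup F2] [Module Q F2]
    (d1 : (Fin m → Q) →ₗ[Q] Q) (d2 : F2 →ₗ[Q] (Fin m → Q)) (d3 : (Fin n → Q) →ₗ[Q] F2)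
    (h12 : LinearMap.range d2 = LinearMap.ker d1)
    (h23 : LinearMap.range d3 = LinearMap.ker d2)
    (h3 : LinearMap.ker d3 = ⊥)
    (hI : LinearMap.range d1 ≤ maximalIdeal Q)
    (hm3 : LinearMap.range d3 ≤ (maximalIdeal Q) • (⊤ : Submodule Q F2))
    (hreg : ∃ x0 y0 z0, x0 ∈ LinearMap.range d1 ∧ y0 ∈ LinearMap.range d1 ∧
      z0 ∈ LinearMap.range d1 ∧ Good x0 y0 z0 Q) :
    ∃ a b c : Fin m → Q, Good (d1 a) (d1 b) (d1 c) Q ∧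
      (∀ r s t : Q, ∃ η : (Fin m → Q) →ₗ[Q] Q, η a = r ∧ η b = s ∧ η c = t) ∧
      (∀ f, d2 f = d1 a • b - d1 b • a → ∀ ξ : F2 →ₗ[Q] Q, ξ f ∈ maximalIdeal Q) ∧
      (∀ f, d2 f = d1 a • c - d1 c • a → ∀ ξ : F2 →ₗ[Q] Q, ξ f ∈ maximalIdeal Q) ∧
      (∀ f, d2 f = d1 b • c - d1 c • b → ∀ ξ : F2 →ₗ[Q] Q, ξ f ∈ maximalIdeal Q) := by
  classical
  obtain ⟨x0, y0, z0, hx0, hy0, hz0, h0⟩ := hreg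
  have hker : ∀ f, d2 f = 0 → ∀ ξ : F2 →ₗ[Q] Q, ξ f ∈ maximalIdeal Q := by
    intro f hf ξ
    have : f ∈ LinearMap.range d3 := by rw [h23]; exact hf
    exact dual_mem _ ξ (hm3 this)
  have hd3 : ∀ (ξ : F2 →ₗ[Q] Q) g, ξ (d3 g) ∈ maximalIdeal Q := fun ξ g =>
    dual_mem _ ξ (hm3 ⟨g, rfl⟩)
  let B := Pi.basisFun Q (Fin m)
  have hex : ∀ i j, ∃ f, d2 f = d1 (B i) • B j - d1 (B j) • B i := by
    intro i j
    have : d1 (B i) • B j - d1 (B j) • B i ∈ LinearMap.range d2 := by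
      rw [h12, LinearMap.mem_ker]; simp only [map_sub, map_smul, smul_eq_mul]; ring
    exact this
  choose f hf using hex
  let φ : (Fin m → Q) →ₗ[Q] (Fin m → Q) →ₗ[Q] F2 :=
    B.constr Q (fun i => B.constr Q (fun j => f i j))
  have hφ : ∀ a b, d2 (φ a b) = d1 a • b - d1 b • a := by
    have : φ.compr₂ d2 = (LinearMap.lsmul Q (Fin m → Q)).comp d1 -
        ((LinearMap.lsmul Q (Fin m → Q)).comp d1).flip := by
      refine B.ext fun i => B.ext fun j => ?_
      simp only [LinearMap.compr₂_apply, φ, Module.Basis.constr_basis, hf]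
      simp
    intro a b
    have h := LinearMap.congr_fun (LinearMap.congr_fun this a) b
    simpa using h
  have lift : ∀ a b c : Fin m → Q, ∃ δ ∈ (maximalIdeal Q) • (⊤ : Submodule Q (Fin m → Q)),
      ∃ ε ∈ (maximalIdeal Q) • (⊤ : Submodule Q (Fin m → Q)),
      ∃ κ ∈ (maximalIdeal Q) • (⊤ : Submodule Q (Fin m → Q)),
      Good (d1 (a + δ)) (d1 (b + ε)) (d1 (c + κ)) Q := by
    intro a b c
    have hmap : ∀ x ∈ maximalIdeal Q * LinearMap.range d1,
        ∃ δ ∈ (maximalIdeal Q) • (⊤ : Submodule Q (Fin m → Q)), d1 δ = x := by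
      intro x hx
      have : x ∈ Submodule.map d1 ((maximalIdeal Q) • (⊤ : Submodule Q (Fin m → Q))) := by
        rw [Submodule.map_smul'', Submodule.map_top]; exact hx
      exact this
    obtain ⟨a', ha', b', hb', c', hc', hG⟩ := good_lift (LinearMap.range d1) (maximalIdeal Q) hI
      hx0 hy0 hz0 h0 (d1 a) (d1 b) (d1 c)
    obtain ⟨δ, hδ, rfl⟩ := hmap a' ha'
    obtain ⟨ε, hε, rfl⟩ := hmap b' hb'
    obtain ⟨κ, hκ, rfl⟩ := hmap c' hc'
    exact ⟨δ, hδ, ε, hε, κ, hκ, by simpa only [map_add] using hG⟩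
  have hres : ∀ (ξ : F2 →ₗ[Q] Q) (a b δ ε : Fin m → Q),
      δ ∈ (maximalIdeal Q) • (⊤ : Submodule Q (Fin m → Q)) →
      ε ∈ (maximalIdeal Q) • (⊤ : Submodule Q (Fin m → Q)) →
      residue Q (ξ (φ (a + δ) (b + ε))) = residue Q (ξ (φ a b)) := by
    intro ξ a b δ ε hδ hε
    have e1 := (residue_eq_zero_iff _).2 (dual_mem _ (ξ ∘ₗ φ.flip (b + ε)) hδ)
    have e2 := (residue_eq_zero_iff _).2 (dual_mem _ (ξ ∘ₗ φ a) hε)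
    simp only [LinearMap.comp_apply, LinearMap.flip_apply] at e1 e2
    rw [map_add φ, LinearMap.add_apply, map_add ξ, map_add (residue Q), e1, map_add (φ a),
      map_add ξ, map_add (residue Q), e2, add_zero, add_zero]
  have hz : (0 : Fin m → Q) ∈ (maximalIdeal Q) • (⊤ : Submodule Q (Fin m → Q)) :=
    Submodule.zero_mem _
  obtain ⟨l, g, hgl, hg⟩ := isotropic_triple hm φ (fun ξ a => hker _ (by rw [hφ]; simp) ξ) (by
    intro ξ a b c d
    obtain ⟨δ, hδ, ε, hε, κ, hκ, hG⟩ := lift a b c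
    have := pf_lemma (maximalIdeal Q) d1 d2 d3 h23 h3 (a + δ) (b + ε) (c + κ) (d + 0) hG
      _ _ _ _ _ _ (hφ _ _) (hφ _ _) (hφ _ _) (hφ _ _) (hφ _ _) (hφ _ _) ξ (hd3 ξ)
    rw [← residue_eq_zero_iff] at this ⊢
    simp only [map_add (residue Q), map_sub (residue Q), map_mul (residue Q)] at this ⊢
    simpa only [hres ξ _ _ _ _ hδ hε, hres ξ _ _ _ _ hδ hκ, hres ξ _ _ _ _ hδ hz,
      hres ξ _ _ _ _ hε hκ, hres ξ _ _ _ _ hε hz, hres ξ _ _ _ _ hκ hz] using this)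
  obtain ⟨δ, hδ, ε, hε, κ, hκ, hG⟩ := lift (g 0) (g 1) (g 2)
  have fin : ∀ (a b δ ε : Fin m → Q),
      δ ∈ (maximalIdeal Q) • (⊤ : Submodule Q (Fin m → Q)) →
      ε ∈ (maximalIdeal Q) • (⊤ : Submodule Q (Fin m → Q)) →
      (∀ ξ : F2 →ₗ[Q] Q, ξ (φ a b) ∈ maximalIdeal Q) →
      ∀ f, d2 f = d1 (a + δ) • (b + ε) - d1 (b + ε) • (a + δ) →
        ∀ ξ : F2 →ₗ[Q] Q, ξ f ∈ maximalIdeal Q := by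
    intro a b δ ε hδ hε h f hf ξ
    have e1 := hker (f - φ (a + δ) (b + ε)) (by rw [map_sub, hf, hφ, sub_self]) ξ
    have e2 := h ξ
    rw [← residue_eq_zero_iff] at e1 e2 ⊢
    rw [map_sub, map_sub, hres ξ _ _ _ _ hδ hε, e2, sub_zero] at e1
    exact e1
  refine ⟨g 0 + δ, g 1 + ε, g 2 + κ, hG, ?_, fin _ _ _ _ hδ hε (hg 0 1), fin _ _ _ _ hδ hκ (hg 0 2),
    fin _ _ _ _ hε hκ (hg 1 2)⟩
  let A : Fin 3 → Fin m → Q := ![g 0 + δ, g 1 + ε, g 2 + κ]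
  let M : Matrix (Fin 3) (Fin 3) Q := fun r s => A r (l s)
  have hM : M.map (residue Q) = 1 := by
    ext r s
    have hc : ∀ (w : Fin m → Q), w ∈ (maximalIdeal Q) • (⊤ : Submodule Q (Fin m → Q)) →
        ∀ i, residue Q (w i) = 0 := fun w hw i =>
      (residue_eq_zero_iff _).2 (dual_mem _ (LinearMap.proj i) hw)
    rw [Matrix.map_apply, Matrix.one_apply]
    have : residue Q (M r s) = residue Q (g r (l s)) := by
      fin_cases r
      · simp [M, A, hc δ hδ]
      · simp [M, A, hc ε hε]
      · simp [M, A, hc κ hκ]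
    rw [this, hgl]
    split_ifs <;> simp
  have hdet : IsUnit M.det := by
    by_contra hcon
    have h1 : residue Q M.det = 0 := (residue_eq_zero_iff _).2 ((mem_maximalIdeal _).2 hcon)
    rw [RingHom.map_det, RingHom.mapMatrix_apply, hM, Matrix.det_one] at h1
    exact one_ne_zero h1
  intro r s t
  let w : Fin 3 → Q := M⁻¹.mulVec ![r, s, t]
  have hw : M.mulVec w = ![r, s, t] := by
    simp only [w, Matrix.mulVec_mulVec, Matrix.mul_nonsing_inv M hdet, Matrix.one_mulVec]
  let η : (Fin m → Q) →ₗ[Q] Q := ∑ u, w u • LinearMap.proj (l u)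
  have hη : ∀ i, η (A i) = (M.mulVec w) i := by
    intro i
    simp only [η, LinearMap.sum_apply, LinearMap.smul_apply, LinearMap.proj_apply, smul_eq_mul,
      Matrix.mulVec, dotProduct, M]
    exact Finset.sum_congr rfl fun _ _ => mul_comm _ _
  rw [hw] at hη
  exact ⟨η, hη 0, hη 1, hη 2⟩


theorem Good.kos {Q : Type*} [CommRing Q] {x y z : Q} {M : Type*} [AddCommGroup M] [Module Q M]
    (h : Good x y z M) {ρ1 ρ2 ρ3 : M} (hρ : x • ρ1 - y • ρ2 + z • ρ3 = 0) :
    ∃ α β κ : M, ρ1 = y • κ - z • β ∧ ρ2 = x • κ - z • α ∧ ρ3 = x • β - y • α := by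
  obtain ⟨β, α', hβ⟩ := h.r3 ρ3 (-ρ1) ρ2 (by
    rw [← sub_eq_zero, ← hρ]; module)
  obtain ⟨κ, hκ⟩ := h.r2 (ρ2 - z • α') (ρ1 + z • β) (by
    rw [← sub_eq_zero, ← neg_zero, ← hρ, hβ]; module)
  refine ⟨-α', β, κ, ?_, ?_, ?_⟩
  · rw [← sub_eq_zero]
    apply h.r1
    have : x • (ρ1 - (y • κ - z • β)) = (x • ρ1 - y • ρ2 + z • ρ3) + y • ((ρ2 - z • α') - x • κ)
        - z • (ρ3 - (x • β + y • α')) := by module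
    rw [this, hρ, sub_eq_zero.2 hκ, sub_eq_zero.2 hβ]; simp
  · rw [← hκ]; module
  · rw [hβ]; module

theorem linlift {Q : Type*} [CommRing Q] {k : ℕ} {M N : Type*} [AddCommGroup M] [Module Q M]
    [AddCommGroup N] [Module Q N] (f : M →ₗ[Q] N) (g : (Fin k → Q) →ₗ[Q] N)
    (h : ∀ v, ∃ u, f u = g v) : ∃ F : (Fin k → Q) →ₗ[Q] M, ∀ v, f (F v) = g v := by
  choose u hu using h
  let B := Pi.basisFun Q (Fin k)
  refine ⟨B.constr Q (fun i => u (B i)), fun v => ?_⟩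
  have : f ∘ₗ (B.constr Q (fun i => u (B i))) = g := B.ext fun i => by
    simp [hu]
  exact LinearMap.congr_fun this v

theorem map_mem_smul {Q : Type*} [CommRing Q] (N : Ideal Q) {M M' : Type*} [AddCommGroup M]
    [Module Q M] [AddCommGroup M'] [Module Q M'] (f : M →ₗ[Q] M') {v : M}
    (h : v ∈ N • (⊤ : Submodule Q M)) : f v ∈ N • (⊤ : Submodule Q M') := by
  have h1 : f v ∈ Submodule.map f (N • (⊤ : Submodule Q M)) := ⟨v, h, rfl⟩
  rw [Submodule.map_smul''] at h1
  exact Submodule.smul_mono le_rfl le_top h1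

theorem dual_mem_smul {Q : Type*} [CommRing Q] (N : Ideal Q) {k : ℕ} (ζ : (Fin k → Q) →ₗ[Q] Q)
    (h : ∀ v, ζ v ∈ N) : ζ ∈ N • (⊤ : Submodule Q ((Fin k → Q) →ₗ[Q] Q)) := by
  have : ζ = ∑ i, ζ (Pi.single i 1) • LinearMap.proj i := by
    refine (Pi.basisFun Q (Fin k)).ext fun j => ?_
    simp [Pi.single_apply]
  rw [this]
  exact Submodule.sum_mem _ fun i _ => Submodule.smul_mem_smul (h _) trivial

open IsLocalRing in
theorem format_of_s3 {Q : Type*} [CommRing Q] [IsLocalRing Q] (J : Ideal Q) (p q N : ℕ)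
    (hN : N = p + q - 1) {M1 M2 M3 : Type*} [AddCommGroup M1] [Module Q M1]
    [AddCommGroup M2] [Module Q M2] [AddCommGroup M3] [Module Q M3]
    (e1 : M1 ≃ₗ[Q] (Fin p → Q)) (e2 : M2 ≃ₗ[Q] (Fin N → Q)) (e3 : M3 ≃ₗ[Q] (Fin q → Q))
    (δ1 : M1 →ₗ[Q] Q) (δ2 : M2 →ₗ[Q] M1) (δ3 : M3 →ₗ[Q] M2)
    (h1 : LinearMap.range δ1 = J) (hJ : J ≤ maximalIdeal Q)
    (c12 : ∀ v, δ1 (δ2 v) = 0) (x12 : ∀ v, δ1 v = 0 → ∃ u, δ2 u = v)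
    (c23 : ∀ v, δ2 (δ3 v) = 0) (x23 : ∀ v, δ2 v = 0 → ∃ u, δ3 u = v)
    (i3 : ∀ v, δ3 v = 0 → v = 0)
    (m2 : ∀ v, δ2 v ∈ maximalIdeal Q • (⊤ : Submodule Q M1))
    (m3 : ∀ v, δ3 v ∈ maximalIdeal Q • (⊤ : Submodule Q M2)) :
    HasResolutionFormat J p q := by
  subst hN
  refine ⟨δ1 ∘ₗ e1.symm.toLinearMap, e1.toLinearMap ∘ₗ δ2 ∘ₗ e2.symm.toLinearMap,
    e2.toLinearMap ∘ₗ δ3 ∘ₗ e3.symm.toLinearMap, ?_, ?_, ?_, ?_, hJ, ?_, ?_⟩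
  · rw [LinearMap.range_comp_of_range_eq_top _ e1.symm.range, h1]
  · ext v
    simp only [LinearMap.mem_range, LinearMap.mem_ker, LinearMap.comp_apply,
      LinearEquiv.coe_coe]
    constructor
    · rintro ⟨u, rfl⟩; simp [c12]
    · intro h
      obtain ⟨u, hu⟩ := x12 _ h
      exact ⟨e2 u, by simp [hu]⟩
  · ext v
    simp only [LinearMap.mem_range, LinearMap.mem_ker, LinearMap.comp_apply,
      LinearEquiv.coe_coe]
    constructor
    · rintro ⟨u, rfl⟩; simp [c23]
    · intro h
      obtain ⟨u, hu⟩ := x23 (e2.symm v) (by simpa using h)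
      exact ⟨e3 u, by simp [hu]⟩
  · rw [LinearMap.ker_eq_bot']
    intro v hv
    simp only [LinearMap.comp_apply, LinearEquiv.coe_coe, LinearEquiv.map_eq_zero_iff] at hv
    simpa using i3 _ hv
  · rintro _ ⟨v, rfl⟩
    exact map_mem_smul _ e1.toLinearMap (m2 _)
  · rintro _ ⟨v, rfl⟩
    exact map_mem_smul _ e2.toLinearMap (m3 _)


theorem annih_rank {Q : Type*} [CommRing Q] [IsNoetherianRing Q] [IsLocalRing Q] {m : ℕ}
    (a b c : Fin m → Q)
    (hsurj : ∀ r s t : Q, ∃ η : (Fin m → Q) →ₗ[Q] Q, η a = r ∧ η b = s ∧ η c = t)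
    (G : Submodule Q ((Fin m → Q) →ₗ[Q] Q)) (hG : ∀ η, η ∈ G ↔ η a = 0 ∧ η b = 0 ∧ η c = 0) :
    Nonempty (G ≃ₗ[Q] (Fin (m - 3) → Q)) := by
  let ev : ((Fin m → Q) →ₗ[Q] Q) →ₗ[Q] (Q × Q × Q) :=
    (LinearMap.applyₗ a).prod ((LinearMap.applyₗ b).prod (LinearMap.applyₗ c))
  have hev : Function.Surjective ev := by
    rintro ⟨r, s, t⟩
    obtain ⟨η, h1, h2, h3⟩ := hsurj r s t
    exact ⟨η, by simp [ev, h1, h2, h3]⟩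
  have hker : G = LinearMap.ker ev := by
    ext η
    rw [hG]; simp [ev]
  subst hker
  obtain ⟨σ, hσ⟩ := Module.projective_lifting_property ev LinearMap.id hev
  have hex : Function.Exact (LinearMap.ker ev).subtype ev := fun v => by simp
  obtain ⟨E, hE1, hE2⟩ := hex.splitSurjectiveEquiv (Submodule.subtype_injective _) ⟨σ, hσ⟩
  have hproj : Module.Projective Q (LinearMap.ker ev) := by
    refine Module.Projective.of_split (LinearMap.ker ev).subtype
      ((LinearMap.fst Q _ _) ∘ₗ E.toLinearMap) ?_
    refine LinearMap.ext fun v => ?_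
    have h1 := LinearMap.congr_fun hE1 v
    simp only [LinearMap.comp_apply] at h1 ⊢
    rw [h1]
    simp
  have hfin : Module.Finite Q (LinearMap.ker ev) := inferInstance
  have hflat : Module.Flat Q (LinearMap.ker ev) := inferInstance
  have hfree : Module.Free Q (LinearMap.ker ev) :=
    Module.free_of_flat_of_isLocalRing (R := Q) (P := LinearMap.ker ev)
  have hr : Module.finrank Q (LinearMap.ker ev) = m - 3 := by
    have := E.finrank_eq
    simp [Module.finrank_linearMap] at this
    omega
  exact ⟨LinearEquiv.ofFinrankEq _ _ (by simp [hr])⟩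

theorem colon_mem {Q : Type*} [CommRing Q] {m N n : ℕ}
    (d1 : (Fin m → Q) →ₗ[Q] Q) (d2 : (Fin N → Q) →ₗ[Q] (Fin m → Q))
    (d3 : (Fin n → Q) →ₗ[Q] (Fin N → Q))
    (c12 : ∀ f, d1 (d2 f) = 0) (c23 : ∀ g, d2 (d3 g) = 0) (a b c : Fin m → Q)
    (x y z : Q) (hx : d1 a = x) (hy : d1 b = y) (hz : d1 c = z) (hg : Good x y z Q)
    (fab fac fbc : Fin N → Q)
    (hab : d2 fab = x • b - y • a) (hac : d2 fac = x • c - z • a) (hbc : d2 fbc = y • c - z • b)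
    (ψ : Fin n → Q) (hψ : d3 ψ = x • fbc - y • fac + z • fab) (u : Q)
    (hu : ∀ v, ∃ r s t, x * r - y * s + z * t = u * d1 v) :
    ∃ (θ : (Fin n → Q) →ₗ[Q] Q) (r1 r2 r3 : Q), u = θ ψ - (x * r1 - y * r2 + z * r3) := by
  let kz : (Q × Q × Q) →ₗ[Q] Q := x • LinearMap.fst Q Q (Q × Q)
    - y • (LinearMap.fst Q Q Q ∘ₗ LinearMap.snd Q Q (Q × Q))
    + z • (LinearMap.snd Q Q Q ∘ₗ LinearMap.snd Q Q (Q × Q))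
  obtain ⟨H, hH⟩ := linlift kz (u • d1) (by
    intro v
    obtain ⟨r, s, t, h⟩ := hu v
    exact ⟨(r, s, t), by simp [kz, h]⟩)
  obtain ⟨R, T, S, hRTS⟩ : ∃ R T S : (Fin m → Q) →ₗ[Q] Q,
      ∀ v, x * R v - y * T v + z * S v = u * d1 v :=
    ⟨LinearMap.fst Q Q (Q × Q) ∘ₗ H, LinearMap.fst Q Q Q ∘ₗ LinearMap.snd Q Q (Q × Q) ∘ₗ H,
      LinearMap.snd Q Q Q ∘ₗ LinearMap.snd Q Q (Q × Q) ∘ₗ H, fun v => by simpa [kz] using hH v⟩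
  obtain ⟨α, β, κ, hR, hT, hS⟩ := (hg.dual N).kos (ρ1 := R ∘ₗ d2) (ρ2 := T ∘ₗ d2)
    (ρ3 := S ∘ₗ d2) (LinearMap.ext fun f => by
      have := hRTS (d2 f)
      rw [c12, mul_zero] at this
      simpa using this)
  have hR' : ∀ f, R (d2 f) = y * κ f - z * β f := fun f => by
    simpa using LinearMap.congr_fun hR f
  have hS' : ∀ f, S (d2 f) = x * β f - y * α f := fun f => by
    simpa using LinearMap.congr_fun hS f
  obtain ⟨θ, hθ⟩ := (hg.dual n).r2 (α ∘ₗ d3) (β ∘ₗ d3) (LinearMap.ext fun g => by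
    have := hS' (d3 g)
    rw [c23, map_zero] at this
    simp only [LinearMap.smul_apply, LinearMap.comp_apply, smul_eq_mul]
    linear_combination this)
  have hθψ : x * θ ψ = x * α fbc - y * α fac + z * α fab := by
    have := LinearMap.congr_fun hθ ψ
    simp only [LinearMap.smul_apply, LinearMap.comp_apply, smul_eq_mul, hψ, map_add, map_sub,
      map_smul] at this
    exact this.symm
  obtain ⟨αa, βa, κa, hRa, -, -⟩ := hg.kos (ρ1 := R a - u) (ρ2 := T a) (ρ3 := S a) (by
    have := hRTS a
    rw [hx] at this
    simp only [smul_eq_mul]; linear_combination this)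
  obtain ⟨αb, βb, κb, -, -, hSb⟩ := hg.kos (ρ1 := R b) (ρ2 := T b + u) (ρ3 := S b) (by
    have := hRTS b
    rw [hy] at this
    simp only [smul_eq_mul]; linear_combination this)
  simp only [smul_eq_mul] at hRa hSb
  have s1 := hS' fab
  have s2 := hS' fac
  have s3 := hS' fbc
  have s4 := hR' fac
  simp only [hab, hac, hbc, map_sub, map_smul, smul_eq_mul] at s1 s2 s3 s4
  obtain ⟨μ, hμ⟩ := hg.r2 (α fab - S a) (β fab - S b) (by
    simp only [smul_eq_mul]; linear_combination s1)
  obtain ⟨s, t, hst⟩ := hg.r3 (β fac - R a) (-R c) (κ fac) (by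
    simp only [smul_eq_mul]; linear_combination s4)
  obtain ⟨ν, hν⟩ := hg.r2 (S c + α fbc + z * αb) (β fbc + z * βb) (by
    simp only [smul_eq_mul]; linear_combination s3 + z * hSb)
  simp only [smul_eq_mul] at hμ hst hν
  refine ⟨-θ, s - ν, -(κa + t), -(βa - αb + μ), ?_⟩
  rw [← sub_eq_zero]
  apply hg.r1
  simp only [smul_eq_mul, LinearMap.neg_apply]
  linear_combination hθψ + z * hμ + x * hν - x * hst - x * hRa - s2


theorem linkage_exact {Q : Type*} [CommRing Q] {m N n : ℕ}
    (d1 : (Fin m → Q) →ₗ[Q] Q) (d2 : (Fin N → Q) →ₗ[Q] (Fin m → Q))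
    (d3 : (Fin n → Q) →ₗ[Q] (Fin N → Q))
    (h12 : LinearMap.range d2 = LinearMap.ker d1)
    (h23 : LinearMap.range d3 = LinearMap.ker d2)
    (h3 : LinearMap.ker d3 = ⊥) (a b c : Fin m → Q)
    (x y z : Q) (hx : d1 a = x) (hy : d1 b = y) (hz : d1 c = z) (hg : Good x y z Q)
    (hsurj : ∀ r s t : Q, ∃ η : (Fin m → Q) →ₗ[Q] Q, η a = r ∧ η b = s ∧ η c = t) :
    ∃ (fab fac fbc : Fin N → Q) (ψ : Fin n → Q),
      d2 fab = x • b - y • a ∧ d2 fac = x • c - z • a ∧ d2 fbc = y • c - z • b ∧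
      d3 ψ = x • fbc - y • fac + z • fab ∧
      (∀ (θ : (Fin n → Q) →ₗ[Q] Q) g, ∃ r s t, θ ψ * d1 g = x * r + y * s + z * t) ∧
      (∀ η : (Fin m → Q) →ₗ[Q] Q, (∀ f, η (d2 f) = 0) → η a = 0 → η = 0) ∧
      (∀ ζ : (Fin N → Q) →ₗ[Q] Q, (∀ g, ζ (d3 g) = 0) → ζ fab = 0 → ζ fac = 0 →
        ∃ η : (Fin m → Q) →ₗ[Q] Q, η a = 0 ∧ η b = 0 ∧ η c = 0 ∧ η ∘ₗ d2 = ζ) ∧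
      (∀ (θ : (Fin n → Q) →ₗ[Q] Q) (r1 r2 r3 : Q), θ ψ = x * r1 - y * r2 + z * r3 →
        ∃ ζ : (Fin N → Q) →ₗ[Q] Q, ζ ∘ₗ d3 = θ ∧ ζ fbc = r1 ∧ ζ fac = r2 ∧ ζ fab = r3) := by
  have e12 : ∀ v, d1 v = 0 → ∃ f, d2 f = v := fun v hv => by
    have : v ∈ LinearMap.range d2 := by rw [h12]; exact hv
    exact this
  have e23 : ∀ v, d2 v = 0 → ∃ f, d3 f = v := fun v hv => by
    have : v ∈ LinearMap.range d3 := by rw [h23]; exact hv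
    exact this
  have c12 : ∀ f, d1 (d2 f) = 0 := fun f => by
    have : d2 f ∈ LinearMap.ker d1 := by rw [← h12]; exact ⟨f, rfl⟩
    exact this
  have c23 : ∀ f, d2 (d3 f) = 0 := fun f => by
    have : d3 f ∈ LinearMap.ker d2 := by rw [← h23]; exact ⟨f, rfl⟩
    exact this
  have inj : ∀ u v, d3 u = d3 v → u = v := fun u v h => LinearMap.ker_eq_bot.1 h3 h
  have key : ∀ e : Fin m → Q, ∃ A : (Fin m → Q) →ₗ[Q] (Fin N → Q),
      ∀ g, d2 (A g) = d1 e • g - d1 g • e := by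
    intro e
    obtain ⟨A, hA⟩ := linlift d2 (d1 e • LinearMap.id - d1.smulRight e) (fun v => e12 _ (by
      simp [mul_comm]))
    exact ⟨A, fun g => by simpa using hA g⟩
  obtain ⟨A, hA⟩ := key a
  obtain ⟨B, hB⟩ := key b
  obtain ⟨C, hC⟩ := key c
  rw [hx] at hA
  rw [hy] at hB
  rw [hz] at hC
  obtain ⟨ψ, hψ⟩ := e23 (x • B c - y • A c + z • A b) (by
    simp only [map_add, map_sub, map_smul, hA, hB, hx, hy, hz]; module)
  have keyH : ∀ (w : Q) (e : Fin m → Q) (A : (Fin m → Q) →ₗ[Q] (Fin N → Q)),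
      (∀ g, d2 (A g) = w • g - d1 g • e) →
      ∃ H : (Fin N → Q) →ₗ[Q] (Fin n → Q), ∀ f, d3 (H f) = w • f - A (d2 f) := by
    intro w e A hA
    obtain ⟨H, hH⟩ := linlift d3 (w • LinearMap.id - A ∘ₗ d2) (fun v => e23 _ (by
      simp [hA, c12]))
    exact ⟨H, fun g => by simpa using hH g⟩
  obtain ⟨Ha, hHa⟩ := keyH x a A hA
  obtain ⟨Hb, hHb⟩ := keyH y b B hB
  have keyP : ∀ (w w' : Q) (e e' : Fin m → Q) (A A' : (Fin m → Q) →ₗ[Q] (Fin N → Q)),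
      (∀ g, d2 (A g) = w • g - d1 g • e) → (∀ g, d2 (A' g) = w' • g - d1 g • e') → d1 e' = w' →
      ∃ P : (Fin m → Q) →ₗ[Q] (Fin n → Q), ∀ g, d3 (P g) = w • A' g - w' • A g + d1 g • A e' := by
    intro w w' e e' A A' hA hA' he'
    obtain ⟨H, hH⟩ := linlift d3 (w • A' - w' • A + d1.smulRight (A e')) (fun v => e23 _ (by
      simp only [map_add, map_sub, map_smul, hA, hA', he', LinearMap.add_apply,
        LinearMap.sub_apply, LinearMap.smul_apply, LinearMap.smulRight_apply]; module))
    exact ⟨H, fun g => by simpa using hH g⟩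
  obtain ⟨Pab, hPab⟩ := keyP x y a b A B hA hB hy
  obtain ⟨Pac, hPac⟩ := keyP x z a c A C hA hC hz
  obtain ⟨Pbc, hPbc⟩ := keyP y z b c B C hB hC hz
  have hHP : ∀ f, y • Ha f - x • Hb f = Pab (d2 f) := fun f => inj _ _ (by
    simp only [map_sub, map_smul, hHa, hHb, hPab, c12]; module)
  have hPP : ∀ g, z • Pab g - y • Pac g + x • Pbc g = d1 g • ψ := fun g => inj _ _ (by
    simp only [map_add, map_sub, map_smul, hPab, hPac, hPbc, hψ]; module)
  have hHd : ∀ g, Ha (d3 g) = x • g := fun g => inj _ _ (by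
    simp only [map_smul, hHa, c23]; simp)
  refine ⟨A b, A c, B c, ψ, ?_, ?_, ?_, hψ, ?_, ?_, ?_, ?_⟩
  · rw [hA, hy]
  · rw [hA, hz]
  · rw [hB, hz]
  · intro θ g
    refine ⟨θ (Pbc g), - θ (Pac g), θ (Pab g), ?_⟩
    have := congrArg θ (hPP g)
    simp only [map_add, map_sub, map_smul, smul_eq_mul] at this
    linear_combination -this
  · intro η h0 ha
    refine LinearMap.ext fun g => ?_
    apply hg.r1
    have := h0 (A g)
    rw [hA] at this
    simpa [ha] using this
  · intro ζ h0 hab hac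
    have hyA : y • (ζ ∘ₗ A) = x • (ζ ∘ₗ B) := LinearMap.ext fun g => by
      have := h0 (Pab g)
      rw [hPab] at this
      simp only [map_add, map_sub, map_smul, hab, smul_eq_mul] at this
      simp only [LinearMap.smul_apply, LinearMap.comp_apply, smul_eq_mul]
      linear_combination -this
    obtain ⟨η, hη⟩ := (hg.dual m).r2 _ _ hyA
    have hη' : ∀ g, ζ (A g) = x * η g := fun g => by simpa using LinearMap.congr_fun hη g
    refine ⟨η, ?_, ?_, ?_, ?_⟩
    · apply hg.r1
      obtain ⟨u, hu⟩ := e23 (A a) (by rw [hA, hx]; simp)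
      rw [smul_eq_mul, ← hη', ← hu, h0]
    · apply hg.r1
      rw [smul_eq_mul, ← hη', hab]
    · apply hg.r1
      rw [smul_eq_mul, ← hη', hac]
    · refine LinearMap.ext fun f => ?_
      rw [← sub_eq_zero]
      apply hg.r1
      have := h0 (Ha f)
      rw [hHa, map_sub, map_smul, hη', smul_eq_mul] at this
      simp only [LinearMap.comp_apply, smul_eq_mul]
      linear_combination -this
  · intro θ r1 r2 r3 hθ
    obtain ⟨s, t, hst⟩ := (hg.dual m).r3 (θ ∘ₗ Pab - r3 • d1) (-(θ ∘ₗ Pbc - r1 • d1))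
      (θ ∘ₗ Pac - r2 • d1) (LinearMap.ext fun g => by
        have := congrArg θ (hPP g)
        simp only [map_add, map_sub, map_smul, smul_eq_mul] at this
        simp only [LinearMap.smul_apply, LinearMap.comp_apply, smul_eq_mul, LinearMap.add_apply,
          LinearMap.sub_apply, LinearMap.neg_apply]
        linear_combination this + d1 g * hθ)
    have hst' : ∀ g, θ (Pab g) - r3 * d1 g = x * s g + y * t g := fun g => by
      simpa using LinearMap.congr_fun hst g
    obtain ⟨ζ, hζ⟩ := (hg.dual N).r2 (θ ∘ₗ Ha - t ∘ₗ d2) (θ ∘ₗ Hb + s ∘ₗ d2)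
      (LinearMap.ext fun f => by
        have h1 := congrArg θ (hHP f)
        have h2 := hst' (d2 f)
        simp only [map_add, map_sub, map_smul, smul_eq_mul] at h1
        rw [c12] at h2
        simp only [LinearMap.smul_apply, LinearMap.comp_apply, smul_eq_mul, LinearMap.add_apply,
          LinearMap.sub_apply]
        linear_combination h1 + h2)
    have hζ3 : ∀ g, ζ (d3 g) = θ g := fun g => by
      rw [← sub_eq_zero]
      apply hg.r1
      have := LinearMap.congr_fun hζ (d3 g)
      simp only [LinearMap.smul_apply, LinearMap.comp_apply, smul_eq_mul,
          LinearMap.sub_apply, hHd, c23, map_smul, map_zero] at this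
      simp only [smul_eq_mul]
      linear_combination -this
    obtain ⟨α, β, κ, h1, h2, h3⟩ := hg.kos (ρ1 := r1 - ζ (B c)) (ρ2 := r2 - ζ (A c))
      (ρ3 := r3 - ζ (A b)) (by
        have := hζ3 ψ
        rw [hψ] at this
        simp only [map_add, map_sub, map_smul, smul_eq_mul] at this
        simp only [smul_eq_mul]
        linear_combination -this - hθ)
    obtain ⟨η, ea, eb, ec⟩ := hsurj α β κ
    simp only [smul_eq_mul] at h1 h2 h3
    refine ⟨ζ + η ∘ₗ d2, LinearMap.ext fun g => by simp [hζ3, c23], ?_, ?_, ?_⟩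
    · simp only [LinearMap.add_apply, LinearMap.comp_apply, hB, hz, map_sub, map_smul, eb, ec,
        smul_eq_mul]
      linear_combination -h1
    · simp only [LinearMap.add_apply, LinearMap.comp_apply, hA, hz, map_sub, map_smul, ea, ec,
        smul_eq_mul]
      linear_combination -h2
    · simp only [LinearMap.add_apply, LinearMap.comp_apply, hA, hy, map_sub, map_smul, ea, eb,
        smul_eq_mul]
      linear_combination -h3


open IsLocalRing in
theorem stmt_3_aux (Q : Type*) [CommRing Q] [IsNoetherianRing Q] [IsLocalRing Q]
    (I : Ideal Q) (m n : ℕ) (hI : IsGrade3PerfectOfFormat I m n) (hm : 5 ≤ m) :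
    ∃ J : Ideal Q, IsGrade3PerfectOfFormat J (n + 3) (m - 3) ∧ DirectlyLinked I J := by
  obtain ⟨⟨x0, y0, z0, hx0, hy0, hz0, hreg⟩, -, hn, d1, d2, d3, rfl, h12, h23, h3, hIm, hm2, hm3⟩ := hI
  obtain ⟨a, b, c, hg, hsurj, hfab, hfac, hfbc⟩ := choose_triple hm d1 d2 d3 h12 h23 h3 hIm hm3
    ⟨x0, y0, z0, hx0, hy0, hz0, good_iff.1 hreg.toIsWeaklyRegular⟩
  obtain ⟨fab, fac, fbc, ψ, hab, hac, hbc, hψ, hcol, i3, x23, x12⟩ :=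
    linkage_exact d1 d2 d3 h12 h23 h3 a b c _ _ _ rfl rfl rfl hg hsurj
  have c12 : ∀ f, d1 (d2 f) = 0 := fun f => by
    have : d2 f ∈ LinearMap.ker d1 := by rw [← h12]; exact ⟨f, rfl⟩
    exact this
  have c23 : ∀ f, d2 (d3 f) = 0 := fun f => by
    have : d3 f ∈ LinearMap.ker d2 := by rw [← h23]; exact ⟨f, rfl⟩
    exact this
  have hcm := colon_mem d1 d2 d3 c12 c23 a b c _ _ _ rfl rfl rfl hg fab fac fbc hab hac hbc ψ hψ
  replace hfab := hfab fab hab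
  replace hfac := hfac fac hac
  replace hfbc := hfbc fbc hbc
  have hxI : d1 a ∈ LinearMap.range d1 := ⟨a, rfl⟩
  have hyI : d1 b ∈ LinearMap.range d1 := ⟨b, rfl⟩
  have hzI : d1 c ∈ LinearMap.range d1 := ⟨c, rfl⟩
  have hreg' : RingTheory.Sequence.IsRegular Q [d1 a, d1 b, d1 c] := by
    rw [IsLocalRing.isRegular_iff_isWeaklyRegular_of_subset_maximalIdeal]
    · exact good_iff.2 hg
    · intro r hr
      simp only [List.mem_cons, List.not_mem_nil, or_false] at hr
      rcases hr with rfl | rfl | rfl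
      exacts [hIm hxI, hIm hyI, hIm hzI]
  let G : Submodule Q ((Fin m → Q) →ₗ[Q] Q) :=
    { carrier := {η | η a = 0 ∧ η b = 0 ∧ η c = 0}
      add_mem' := by
        rintro η η' ⟨h1, h2, h3⟩ ⟨h1', h2', h3'⟩
        exact ⟨by simp [h1, h1'], by simp [h2, h2'], by simp [h3, h3']⟩
      zero_mem' := ⟨rfl, rfl, rfl⟩
      smul_mem' := by
        rintro r η ⟨h1, h2, h3⟩
        exact ⟨by simp [h1], by simp [h2], by simp [h3]⟩ }
  have hG : ∀ η, η ∈ G ↔ η a = 0 ∧ η b = 0 ∧ η c = 0 := fun η => Iff.rfl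
  obtain ⟨e3⟩ := annih_rank a b c hsurj G hG
  let δ3 : G →ₗ[Q] ((Fin (m + n - 1) → Q) →ₗ[Q] Q) := (LinearMap.lcomp Q Q d2) ∘ₗ G.subtype
  let δ2 : ((Fin (m + n - 1) → Q) →ₗ[Q] Q) →ₗ[Q] (((Fin n → Q) →ₗ[Q] Q) × Q × Q × Q) :=
    (LinearMap.lcomp Q Q d3).prod ((LinearMap.applyₗ fbc).prod
      ((LinearMap.applyₗ fac).prod (LinearMap.applyₗ fab)))
  let p1 : (((Fin n → Q) →ₗ[Q] Q) × Q × Q × Q) →ₗ[Q] ((Fin n → Q) →ₗ[Q] Q) := LinearMap.fst _ _ _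
  let p2 : (((Fin n → Q) →ₗ[Q] Q) × Q × Q × Q) →ₗ[Q] (Q × Q × Q) := LinearMap.snd _ _ _
  let kz : (Q × Q × Q) →ₗ[Q] Q := d1 a • LinearMap.fst Q Q (Q × Q)
    - d1 b • (LinearMap.fst Q Q Q ∘ₗ LinearMap.snd Q Q (Q × Q))
    + d1 c • (LinearMap.snd Q Q Q ∘ₗ LinearMap.snd Q Q (Q × Q))
  let δ1 : (((Fin n → Q) →ₗ[Q] Q) × Q × Q × Q) →ₗ[Q] Q := LinearMap.applyₗ ψ ∘ₗ p1 - kz ∘ₗ p2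
  have hδ1 : ∀ θ r1 r2 r3, δ1 (θ, r1, r2, r3) = θ ψ - (d1 a * r1 - d1 b * r2 + d1 c * r3) := by
    intro θ r1 r2 r3
    simp [δ1, p1, p2, kz]
  have hδ2 : ∀ ζ, δ2 ζ = (ζ ∘ₗ d3, ζ fbc, ζ fac, ζ fab) := fun ζ => rfl
  have hδ3 : ∀ η : G, δ3 η = (η : (Fin m → Q) →ₗ[Q] Q) ∘ₗ d2 := fun η => rfl
  have mem_span : ∀ u : Q, u ∈ Ideal.span {d1 a, d1 b, d1 c} ↔
      ∃ r s t, d1 a * r - d1 b * s + d1 c * t = u := by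
    intro u
    rw [Ideal.span, Submodule.mem_span_triple]
    constructor
    · rintro ⟨r, s, t, h⟩
      exact ⟨r, -s, t, by rw [← h]; simp only [smul_eq_mul]; ring⟩
    · rintro ⟨r, s, t, h⟩
      exact ⟨r, -s, t, by rw [← h]; simp only [smul_eq_mul]; ring⟩
  have hJ : (LinearMap.range δ1 : Ideal Q) =
      Submodule.colon (Ideal.span {d1 a, d1 b, d1 c}) (LinearMap.range d1 : Ideal Q) := by
    ext u
    rw [Submodule.mem_colon]
    constructor
    · rintro ⟨⟨θ, r1, r2, r3⟩, rfl⟩ v hv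
      obtain ⟨g, rfl⟩ := hv
      rw [hδ1, mem_span]
      obtain ⟨r, s, t, h⟩ := hcol θ g
      exact ⟨r - r1 * d1 g, -s - r2 * d1 g, t - r3 * d1 g, by
        rw [smul_eq_mul]; linear_combination -h⟩
    · intro hu
      obtain ⟨θ, r1, r2, r3, h⟩ := hcm u (fun v => (mem_span _).1 (hu (d1 v) ⟨v, rfl⟩))
      exact ⟨(θ, r1, r2, r3), by rw [hδ1, h]⟩
  have hJm : (LinearMap.range δ1 : Ideal Q) ≤ maximalIdeal Q := by
    apply le_maximalIdeal
    intro htop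
    rw [hJ] at htop
    have h1 : (1 : Q) ∈ Submodule.colon (Ideal.span {d1 a, d1 b, d1 c})
      (LinearMap.range d1 : Ideal Q) := by rw [htop]; trivial
    rw [Submodule.mem_colon] at h1
    have hsp : (⊤ : Submodule Q (Fin m → Q)) ≤ Submodule.span Q {a, b, c} := by
      apply Submodule.le_of_le_smul_of_le_jacobson_bot (I := maximalIdeal Q)
        (Module.Finite.fg_top) (IsLocalRing.maximalIdeal_le_jacobson _)
      intro v _
      have h2 := h1 (d1 v) ⟨v, rfl⟩
      rw [one_smul, mem_span] at h2
      obtain ⟨r, s, t, h⟩ := h2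
      have h4 : v - (r • a - s • b + t • c) ∈ LinearMap.range d2 := by
        rw [h12, LinearMap.mem_ker]
        simp only [map_add, map_sub, map_smul, smul_eq_mul]
        linear_combination -h
      rw [← add_sub_cancel (r • a - s • b + t • c) v]
      refine Submodule.add_mem_sup ?_ (hm2 h4)
      rw [Submodule.mem_span_triple]
      exact ⟨r, -s, t, by module⟩
    have hG0 : ∀ η : G, η = 0 := by
      rintro ⟨η, h1, h2, h3⟩
      refine Subtype.ext (LinearMap.ext fun v => ?_)
      obtain ⟨r, s, t, rfl⟩ := Submodule.mem_span_triple.1 (hsp (Submodule.mem_top (x := v)))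
      simp [h1, h2, h3]
    have h5 := hG0 (e3.symm (fun _ => 1))
    rw [LinearEquiv.map_eq_zero_iff] at h5
    exact one_ne_zero (congrFun h5 ⟨0, by omega⟩)
  have hsub : ∀ u ∈ Ideal.span {d1 a, d1 b, d1 c}, u ∈ (LinearMap.range δ1 : Ideal Q) := by
    intro u hu
    rw [hJ, Submodule.mem_colon]
    intro v _
    exact Ideal.mul_mem_right _ _ hu
  refine ⟨LinearMap.range δ1, ⟨⟨d1 a, d1 b, d1 c, hsub _ (Ideal.subset_span (by simp)),
    hsub _ (Ideal.subset_span (by simp)), hsub _ (Ideal.subset_span (by simp)), hreg'⟩, by omega,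
    by omega, ?_⟩, ⟨d1 a, d1 b, d1 c, hxI, hyI, hzI, hreg', hJ⟩⟩
  have e1 : (((Fin n → Q) →ₗ[Q] Q) × Q × Q × Q) ≃ₗ[Q] (Fin (n + 3) → Q) :=
    LinearEquiv.ofFinrankEq _ _ (by simp [Module.finrank_linearMap])
  have e2 : ((Fin (m + n - 1) → Q) →ₗ[Q] Q) ≃ₗ[Q] (Fin (m + n - 1) → Q) :=
    LinearEquiv.ofFinrankEq _ _ (by simp [Module.finrank_linearMap])
  refine format_of_s3 (M3 := G) _ (n + 3) (m - 3) (m + n - 1) (by omega) e1 e2 e3 δ1 δ2 δ3 rfl hJm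
    ?_ ?_ ?_ ?_ ?_ ?_ ?_
  · intro ζ
    rw [hδ2, hδ1, LinearMap.comp_apply, hψ]
    simp
  · rintro ⟨θ, r1, r2, r3⟩ h
    rw [hδ1, sub_eq_zero] at h
    obtain ⟨ζ, h1, h2, h3, h4⟩ := x12 θ r1 r2 r3 h
    exact ⟨ζ, by rw [hδ2, h1, h2, h3, h4]⟩
  · rintro ⟨η, ha, hb, hc⟩
    rw [hδ3, hδ2]
    refine Prod.ext (LinearMap.ext fun g => ?_) (Prod.ext ?_ (Prod.ext ?_ ?_))
    · simp [c23]
    · simp [hbc, hb, hc]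
    · simp [hac, ha, hc]
    · simp [hab, ha, hb]
  · intro ζ h
    rw [hδ2] at h
    simp only [Prod.mk_eq_zero] at h
    obtain ⟨h1, h2, h3, h4⟩ := h
    obtain ⟨η, ha, hb, hc, he⟩ := x23 ζ (fun g => LinearMap.congr_fun h1 g) h4 h3
    exact ⟨⟨η, ha, hb, hc⟩, he⟩
  · rintro ⟨η, ha, hb, hc⟩ h
    exact Subtype.ext (i3 η (fun f => LinearMap.congr_fun h f) ha)
  · intro ζ
    have h1 := map_mem_smul (maximalIdeal Q)
      (LinearMap.inl Q ((Fin n → Q) →ₗ[Q] Q) (Q × Q × Q))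
      (dual_mem_smul (maximalIdeal Q) (ζ ∘ₗ d3) (fun v => dual_mem _ ζ (hm3 ⟨v, rfl⟩)))
    have aux : ∀ (r : Q) (e : ((Fin n → Q) →ₗ[Q] Q) × Q × Q × Q), r ∈ maximalIdeal Q →
        r • e ∈ maximalIdeal Q • (⊤ : Submodule Q (((Fin n → Q) →ₗ[Q] Q) × Q × Q × Q)) :=
      fun r e hr => Submodule.smul_mem_smul hr trivial
    have h2 := add_mem (add_mem (add_mem h1 (aux _ (0, 1, 0, 0) (hfbc ζ)))
      (aux _ (0, 0, 1, 0) (hfac ζ))) (aux _ (0, 0, 0, 1) (hfab ζ))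
    rw [hδ2]
    convert h2 using 1
    simp
  · intro η
    exact dual_mem_smul _ _ (fun v => dual_mem _ (η : (Fin m → Q) →ₗ[Q] Q) (hm2 ⟨v, rfl⟩))

/-- **Proposition 1.2(b).** Let `Q` be a commutative Noetherian local ring and `I ⊆ Q` a
grade `3` perfect ideal of resolution format `(1, m, m+n-1, n)`.  If `m ≥ 5`, then there
exists a grade `3` perfect ideal of resolution format `(1, n+3, m+n-1, m-3)` that is
directly linked to `I`. -/
theorem stmt_3 (Q : Type*) [CommRing Q] [IsNoetherianRing Q] [IsLocalRing Q]
    (I : Ideal Q) (m n : ℕ) (hI : IsGrade3PerfectOfFormat I m n) (hm : 5 ≤ m) :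
    ∃ J : Ideal Q, IsGrade3PerfectOfFormat J (n + 3) (m - 3) ∧ DirectlyLinked I J := by
  exact stmt_3_aux Q I m n hI hm
end
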